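/- Suppose the vertex set I of Q is a disjoint union 𝒥 ∪ 𝒦, and write α = α_𝒥 + α_𝒦 where α_𝒥, α_𝒦 ∈ ℕ^I have support in 𝒥 and 𝒦 respectively. If the dimension vector of every composition factor of every Π^λ-module of dimension vector α has support contained either in 𝒥 or in 𝒦, then there is an isomorphism of varieties N(λ,α) ≅ N(λ,α_𝒥) × N(λ,α_𝒦). -/

import Mathlib

open scoped BigOperators

noncomputable section

/-- A quiver with a finite vertex set `I` and a finite arrow set `A`;
`h a` and `t a` are the head and the tail of the arrow `a`. -/
structure FinQuiver where
  I : Type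
  [fintypeI : Fintype I]
  [decEqI : DecidableEq I]
  A : Type
  [fintypeA : Fintype A]
  h : A → I
  t : A → I

attribute [instance] FinQuiver.fintypeI FinQuiver.decEqI FinQuiver.fintypeA

namespace FinQuiver

variable (Q : FinQuiver)

/-- Arrows of the double quiver `Q̄` : every arrow `a : i → j` of `Q` (as `Sum.inl a`)
together with a reverse arrow `a* : j → i` (as `Sum.inr a`). -/
@[reducible] def DA : Type := Q.A ⊕ Q.A

instance : Fintype Q.DA := inferInstanceAs (Fintype (Q.A ⊕ Q.A))

/-- Head of an arrow of the double quiver. -/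
@[reducible] def dh : Q.DA → Q.I := fun a => match a with
  | Sum.inl a => Q.h a
  | Sum.inr a => Q.t a

/-- Tail of an arrow of the double quiver. -/
@[reducible] def dt : Q.DA → Q.I := fun a => match a with
  | Sum.inl a => Q.t a
  | Sum.inr a => Q.h a

/-- The symmetric bilinear form
`(α,β) = ∑_{i∈I} 2 α_i β_i − ∑_{a∈Q̄} α_{h(a)} β_{t(a)}` on `ℤ^I`. -/
def bil (α β : Q.I → ℤ) : ℤ :=
  (∑ i, 2 * α i * β i) - ∑ a : Q.DA, α (Q.dh a) * β (Q.dt a)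

/-- `p(α) = 1 − q(α) = 1 − α·α + ∑_{a ∈ Q} α_{t(a)} α_{h(a)}`. -/
def pp (α : Q.I → ℤ) : ℤ :=
  1 - (∑ i, α i * α i) + ∑ a : Q.A, α (Q.t a) * α (Q.h a)

/-- The coordinate vector `ε_i` at a vertex `i`. -/
def ev (i : Q.I) : Q.I → ℤ := fun j => if j = i then 1 else 0

/-- The coordinate vector of a vertex, as a vector of natural numbers. -/
def evN (i : Q.I) : Q.I → ℕ := fun j => if j = i then 1 else 0

/-- A vertex is loopfree if no arrow has both its head and its tail there. -/
def Loopfree (i : Q.I) : Prop := ∀ a : Q.A, ¬ (Q.h a = i ∧ Q.t a = i)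

/-- The reflection `s_i(α) = α − (α,ε_i) ε_i` at a (loopfree) vertex `i`. -/
def refl (i : Q.I) (α : Q.I → ℤ) : Q.I → ℤ := α - Q.bil α (Q.ev i) • Q.ev i

/-- Two vertices are joined by some arrow. -/
def Adj (i j : Q.I) : Prop :=
  ∃ a : Q.A, (Q.h a = i ∧ Q.t a = j) ∨ (Q.h a = j ∧ Q.t a = i)

/-- The quiver is connected. -/
def Connected : Prop := ∀ i j : Q.I, Relation.ReflTransGen Q.Adj i j

/-- The support of the vector `α` is connected in `Q`. -/
def SuppConnected (α : Q.I → ℤ) : Prop :=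
  ∀ i j : Q.I, α i ≠ 0 → α j ≠ 0 →
    Relation.ReflTransGen (fun x y => α x ≠ 0 ∧ α y ≠ 0 ∧ Q.Adj x y) i j

/-- The fundamental region: nonzero nonnegative vectors with connected support
such that `(α, ε_i) ≤ 0` for every vertex `i`. -/
def InFund (α : Q.I → ℤ) : Prop :=
  α ≠ 0 ∧ (∀ i, 0 ≤ α i) ∧ Q.SuppConnected α ∧ ∀ i, Q.bil α (Q.ev i) ≤ 0

/-- The roots of the Kac root system attached to `Q` : the real roots form the orbit
of the simple roots (coordinate vectors at loopfree vertices) under the reflections at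
loopfree vertices, and the imaginary roots form the orbit of `±(fundamental region)`
under these reflections. -/
inductive IsRoot : (Q.I → ℤ) → Prop
  | simple (i : Q.I) (hi : Q.Loopfree i) : IsRoot (Q.ev i)
  | fund (α : Q.I → ℤ) (hα : Q.InFund α) : IsRoot α
  | neg_fund (α : Q.I → ℤ) (hα : Q.InFund α) : IsRoot (-α)
  | reflect (i : Q.I) (hi : Q.Loopfree i) (α : Q.I → ℤ) (hα : IsRoot α) :
      IsRoot (Q.refl i α)

/-- Positive roots: roots all of whose components are nonnegative. -/
def IsPosRoot (α : Q.I → ℤ) : Prop := Q.IsRoot α ∧ (∀ i, 0 ≤ α i) ∧ α ≠ 0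

/-- The Tits form is positive semidefinite. -/
def PosSemidef : Prop := ∀ α : Q.I → ℤ, 0 ≤ Q.bil α α

/-- The Tits form is positive definite. -/
def PosDef : Prop := Q.PosSemidef ∧ ∀ α : Q.I → ℤ, Q.bil α α = 0 → α = 0

/-- Dynkin quivers: connected, with positive definite Tits form. -/
def IsDynkin : Prop := Q.Connected ∧ Q.PosDef

/-- Extended Dynkin quivers: connected, with positive semidefinite but not
positive definite Tits form. -/
def IsExtDynkin : Prop := Q.Connected ∧ Q.PosSemidef ∧ ¬ Q.PosDef

/-- `δ` is the minimal positive imaginary root of an extended Dynkin quiver: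
the minimal nonzero nonnegative vector in the radical of the Tits form. -/
def IsMinImag (δ : Q.I → ℤ) : Prop :=
  (∀ i, 0 ≤ δ i) ∧ δ ≠ 0 ∧ (∀ i, Q.bil δ (Q.ev i) = 0) ∧
    ∀ β : Q.I → ℤ, (∀ i, 0 ≤ β i) → β ≠ 0 → (∀ i, Q.bil β (Q.ev i) = 0) →
      ∀ i, δ i ≤ β i

/-- The subquiver of `Q` on a subset `S` of vertices and a subset `B` of arrows. -/
def restrict (S : Set Q.I) (B : Set Q.A) (hh : ∀ a ∈ B, Q.h a ∈ S)
    (ht : ∀ a ∈ B, Q.t a ∈ S) : FinQuiver :=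
  { I := S
    fintypeI := Fintype.ofFinite S
    decEqI := Classical.decEq _
    A := B
    fintypeA := Fintype.ofFinite B
    h := fun a => ⟨Q.h a.1, hh a.1 a.2⟩
    t := fun a => ⟨Q.t a.1, ht a.1 a.2⟩ }

/-- The support quiver of a vector: the full subquiver on the support of `β`. -/
def suppQuiver (β : Q.I → ℤ) : FinQuiver :=
  Q.restrict {i | β i ≠ 0} {a | β (Q.h a) ≠ 0 ∧ β (Q.t a) ≠ 0}
    (fun _ ha => ha.1) (fun _ ha => ha.2)

/-- A dimension vector (of natural numbers), viewed in `ℤ^I`. -/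
def toZ (α : Q.I → ℕ) : Q.I → ℤ := fun i => (α i : ℤ)

/-- An oriented cycle in the double quiver `Q̄`, consisting of `n+1` arrows,
the tail of each arrow being the head of the (cyclically) next one. -/
structure Cyc (Q' : FinQuiver) where
  n : ℕ
  ar : Fin (n + 1) → Q'.DA
  compat : ∀ i : Fin (n + 1), Q'.dt (ar i) = Q'.dh (ar (i + 1))

section WithField

variable (K : Type) [Field K]

/-- `λ·α = ∑_i λ_i α_i`. -/
def pair (l : Q.I → K) (α : Q.I → ℤ) : K := ∑ i, l i * (α i : K)

/-- `R_λ^+`, the set of positive roots `α` with `λ·α = 0`. -/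
def Rplus (l : Q.I → K) : Set (Q.I → ℤ) :=
  {α | Q.IsPosRoot α ∧ Q.pair K l α = 0}

/-- `ℕ R_λ^+`, the set of sums (including the empty sum `0`) of elements of `R_λ^+`. -/
def NRplus (l : Q.I → K) : Set (Q.I → ℤ) :=
  (AddSubmonoid.closure (Q.Rplus K l) : AddSubmonoid (Q.I → ℤ))

/-- `Σ_λ` : the elements `α ∈ R_λ^+` with `p(α) > ∑ p(β⁽ᵗ⁾)` for every decomposition
of `α` as a sum of at least two elements `β⁽ᵗ⁾` of `R_λ^+`. -/
def SigmaSet (l : Q.I → K) : Set (Q.I → ℤ) :=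
  {α | α ∈ Q.Rplus K l ∧
    ∀ (n : ℕ) (β : Fin n → (Q.I → ℤ)), 2 ≤ n → (∀ j, β j ∈ Q.Rplus K l) →
      α = ∑ j, β j → (∑ j, Q.pp (β j)) < Q.pp α}

/-- The dual reflection `r_i(λ)_j = λ_j − (ε_i,ε_j) λ_i`. -/
def coRefl (i : Q.I) (l : Q.I → K) : Q.I → K :=
  fun j => l j - (Q.bil (Q.ev i) (Q.ev j) : ℤ) * l i

/-- A single admissible reflection applied to the pair `(λ, α)`:
a reflection at a loopfree vertex `i` with `λ_i ≠ 0`. -/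
def AdmStep (x y : (Q.I → K) × (Q.I → ℤ)) : Prop :=
  ∃ i : Q.I, Q.Loopfree i ∧ x.1 i ≠ 0 ∧ y.1 = Q.coRefl K i x.1 ∧ y.2 = Q.refl i x.2

/-- `(ν,β)` is obtained from `(λ,α)` by a sequence of admissible reflections:
the two pairs lie in the same class of the equivalence relation generated by
admissible reflections. -/
def AdmEquiv (x y : (Q.I → K) × (Q.I → ℤ)) : Prop :=
  Relation.EqvGen (Q.AdmStep K) x y

/-- The space `Rep(Q̄,α)` of representations of the double quiver. -/
def Rep (α : Q.I → ℕ) : Type :=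
  ∀ a : Q.DA, Matrix (Fin (α (Q.dh a))) (Fin (α (Q.dt a))) K

/-- The moment map
`μ_α(x)_i = ∑_{a∈Q, h(a)=i} x_a x_{a*} − ∑_{a∈Q, t(a)=i} x_{a*} x_a`. -/
def moment (α : Q.I → ℕ) (x : Q.Rep K α) (i : Q.I) :
    Matrix (Fin (α i)) (Fin (α i)) K :=
  (∑ a : Q.A, if h : Q.h a = i then
      (x (Sum.inl a) * x (Sum.inr a)).submatrix
        (Fin.cast (congrArg α h).symm) (Fin.cast (congrArg α h).symm)
    else 0)
  - ∑ a : Q.A, if h : Q.t a = i then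
      (x (Sum.inr a) * x (Sum.inl a)).submatrix
        (Fin.cast (congrArg α h).symm) (Fin.cast (congrArg α h).symm)
    else 0

/-- The fibre `μ_α^{-1}(λ)` of the moment map over (the central element
corresponding to) `λ`. -/
def MomentFiber (l : Q.I → K) (α : Q.I → ℕ) : Set (Q.Rep K α) :=
  {x | ∀ i : Q.I, Q.moment K α x i = l i • (1 : Matrix (Fin (α i)) (Fin (α i)) K)}

/-- The group `∏_i GL(α_i,K)`; it acts on `Rep(Q̄,α)` by conjugation, with the same
orbits and the same invariant functions as `G(α) = (∏_i GL(α_i,K))/K^*`. -/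
def Gl (α : Q.I → ℕ) : Type := ∀ i : Q.I, Matrix.GeneralLinearGroup (Fin (α i)) K

/-- The conjugation action of `∏_i GL(α_i,K)` on `Rep(Q̄,α)`. -/
def glAct (α : Q.I → ℕ) (g : Q.Gl K α) (x : Q.Rep K α) : Q.Rep K α :=
  fun a => (g (Q.dh a) : Matrix (Fin (α (Q.dh a))) (Fin (α (Q.dh a))) K) * x a *
    (((g (Q.dt a))⁻¹ : Matrix.GeneralLinearGroup (Fin (α (Q.dt a))) K) :
      Matrix (Fin (α (Q.dt a))) (Fin (α (Q.dt a))) K)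

/-- Coordinates on `Rep(Q̄,α)`: matrix entries. -/
def Coords (α : Q.I → ℕ) : Type :=
  Σ a : Q.DA, Fin (α (Q.dh a)) × Fin (α (Q.dt a))

/-- The coordinate ring `K[V]` of a subset `V` of `Rep(Q̄,α)` : the algebra of
`K`-valued functions on `V` which are restrictions of polynomial functions. -/
def fnRing (α : Q.I → ℕ) (V : Set (Q.Rep K α)) : Subalgebra K (↥V → K) :=
  (MvPolynomial.aeval
    (fun c : Q.Coords α => fun v : ↥V => v.1 c.1 c.2.1 c.2.2) :
    MvPolynomial (Q.Coords α) K →ₐ[K] (↥V → K)).range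

end WithField

end FinQuiver

/-- The subalgebra of functions invariant under a relation (e.g. the orbit
relation of a group action). -/
def relInv (K : Type) [Field K] {V : Type} (R : V → V → Prop) :
    Subalgebra K (V → K) where
  carrier := {f | ∀ x y : V, R x y → f x = f y}
  mul_mem' := by
    intro f g hf hg x y hxy
    simp only [Pi.mul_apply, hf x y hxy, hg x y hxy]
  one_mem' := fun x y _ => rfl
  add_mem' := by
    intro f g hf hg x y hxy
    simp only [Pi.add_apply, hf x y hxy, hg x y hxy]
  zero_mem' := fun x y _ => rfl
  algebraMap_mem' := fun c x y _ => rfl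

namespace FinQuiver

variable (Q : FinQuiver) (K : Type) [Field K]

/-- The coordinate ring of the Marsden–Weinstein reduction
`N(λ,α) = μ_α^{-1}(λ) ⫽ G(α)` : the `G(α)`-invariant functions in the coordinate
ring of `μ_α^{-1}(λ)`.  Two such reductions are isomorphic as (affine) varieties
exactly when these `K`-algebras are isomorphic. -/
def InvRing (l : Q.I → K) (α : Q.I → ℕ) :
    Subalgebra K (↥(Q.MomentFiber K l α) → K) :=
  Q.fnRing K α (Q.MomentFiber K l α) ⊓
    relInv K (fun x y : ↥(Q.MomentFiber K l α) =>
      ∃ g : Q.Gl K α, y.1 = Q.glAct K α g x.1)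

/-- Index type for a product `∏_t X_t^{m_t}`. -/
@[reducible] def SymIdx (s : ℕ) (m : Fin s → ℕ) : Type := Σ t : Fin s, Fin (m t)

/-- The product `∏_{t} Rep(Q̄, d_t)^{m_t}` of representation spaces. -/
def SymRep (s : ℕ) (m : Fin s → ℕ) (d : Fin s → (Q.I → ℕ)) : Type :=
  ∀ p : SymIdx s m, Q.Rep K (d p.1)

/-- The product `∏_t μ_{d_t}^{-1}(λ)^{m_t}` of moment map fibres. -/
def SymFiber (s : ℕ) (m : Fin s → ℕ) (d : Fin s → (Q.I → ℕ)) (l : Q.I → K) :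
    Set (Q.SymRep K s m d) :=
  {x | ∀ p : SymIdx s m, x p ∈ Q.MomentFiber K l (d p.1)}

/-- Polynomial functions on the product of fibres. -/
def symFnRing (s : ℕ) (m : Fin s → ℕ) (d : Fin s → (Q.I → ℕ)) (l : Q.I → K) :
    Subalgebra K (↥(Q.SymFiber K s m d l) → K) :=
  (MvPolynomial.aeval
    (fun c : Σ p : SymIdx s m, Q.Coords (d p.1) =>
      fun v : ↥(Q.SymFiber K s m d l) => v.1 c.1 c.2.1 c.2.2.1 c.2.2.2) :
    MvPolynomial (Σ p : SymIdx s m, Q.Coords (d p.1)) K →ₐ[K]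
      (↥(Q.SymFiber K s m d l) → K)).range

/-- The componentwise action of the product of the groups `∏ GL(d_t)^{m_t}`. -/
def symGlAct (s : ℕ) (m : Fin s → ℕ) (d : Fin s → (Q.I → ℕ))
    (g : ∀ p : SymIdx s m, Q.Gl K (d p.1)) (x : Q.SymRep K s m d) :
    Q.SymRep K s m d :=
  fun p => Q.glAct K (d p.1) (g p) (x p)

/-- The action of `∏_t S_{m_t}` permuting the factors of each `X_t^{m_t}`. -/
def symPermAct (s : ℕ) (m : Fin s → ℕ) (d : Fin s → (Q.I → ℕ))
    (π : ∀ t : Fin s, Equiv.Perm (Fin (m t))) (x : Q.SymRep K s m d) :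
    Q.SymRep K s m d :=
  fun p => x ⟨p.1, π p.1 p.2⟩

/-- The coordinate ring of the product of symmetric products
`∏_t S^{m_t} N(λ, d_t)` of Marsden–Weinstein reductions: functions on
`∏_t μ_{d_t}^{-1}(λ)^{m_t}` which are polynomial, invariant under all the groups
`G(d_t)` acting on the separate factors, and symmetric under permutations of the
`m_t` factors of each type `t`. -/
def SymInvRing (s : ℕ) (m : Fin s → ℕ) (d : Fin s → (Q.I → ℕ)) (l : Q.I → K) :
    Subalgebra K (↥(Q.SymFiber K s m d l) → K) :=
  Q.symFnRing K s m d l ⊓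
    relInv K (fun x y : ↥(Q.SymFiber K s m d l) =>
      ∃ g : ∀ p : SymIdx s m, Q.Gl K (d p.1), y.1 = Q.symGlAct K s m d g x.1) ⊓
    relInv K (fun x y : ↥(Q.SymFiber K s m d l) =>
      ∃ π : ∀ t : Fin s, Equiv.Perm (Fin (m t)), y.1 = Q.symPermAct K s m d π x.1)

/-- The trace function `tr_p` of an oriented cycle `p` in `Q̄` :
`tr_p(x) = tr(x_{a_1} ⋯ x_{a_ℓ})`, written out via matrix entries. -/
def cycTr (α : Q.I → ℕ) (p : Q.Cyc) (x : Q.Rep K α) : K :=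
  ∑ c : ∀ i : Fin (p.n + 1), Fin (α (Q.dh (p.ar i))),
    ∏ i : Fin (p.n + 1),
      x (p.ar i) (c i) (Fin.cast (congrArg α (p.compat i)).symm (c (i + 1)))

/-- `U` is a subrepresentation of the `Π^λ`-module given by the point
`x ∈ Rep(Q̄,α)` : a collection of subspaces stable under all the maps `x_a`. -/
def SubRep (α : Q.I → ℕ) (x : Q.Rep K α)
    (U : ∀ i : Q.I, Submodule K (Fin (α i) → K)) : Prop :=
  ∀ a : Q.DA, ∀ v ∈ U (Q.dt a), (x a).mulVec v ∈ U (Q.dh a)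

/-- The module given by `x` has the simple module `S_{i₀}` (dimension vector
`ε_{i₀}`, all arrows acting as zero) as a composition factor: it has a subquotient
of dimension vector `ε_{i₀}` on which all arrows act as zero. -/
def HasSFactor (α : Q.I → ℕ) (i0 : Q.I) (x : Q.Rep K α) : Prop :=
  ∃ U W : ∀ i : Q.I, Submodule K (Fin (α i) → K),
    Q.SubRep K α x U ∧ Q.SubRep K α x W ∧ (∀ i, U i ≤ W i) ∧
    (∀ i, Module.finrank K (W i) =
      Module.finrank K (U i) + (if i = i0 then 1 else 0)) ∧
    (∀ a : Q.DA, Q.dh a = i0 → Q.dt a = i0 →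
      ∀ v ∈ W (Q.dt a), (x a).mulVec v ∈ U (Q.dh a))

/-- `W/U` is a simple subquotient of the module given by `x`; the simple
subquotients of a module are, up to isomorphism, exactly its composition factors. -/
def SimpleSubquot (α : Q.I → ℕ) (x : Q.Rep K α)
    (U W : ∀ i : Q.I, Submodule K (Fin (α i) → K)) : Prop :=
  Q.SubRep K α x U ∧ Q.SubRep K α x W ∧ (∀ i, U i ≤ W i) ∧ U ≠ W ∧
    ∀ V : ∀ i : Q.I, Submodule K (Fin (α i) → K),
      Q.SubRep K α x V → (∀ i, U i ≤ V i) → (∀ i, V i ≤ W i) → V = U ∨ V = W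

/-- The direct sum map `∏_{j=1}^m Rep(Q̄,δ) → Rep(Q̄,mδ)` (block diagonal). -/
def dsMap (δ : Q.I → ℕ) (m : ℕ) (y : Fin m → Q.Rep K δ) :
    Q.Rep K (fun i => m * δ i) :=
  fun a => Matrix.of fun r c =>
    if (finProdFinEquiv.symm r).1 = (finProdFinEquiv.symm c).1 then
      y (finProdFinEquiv.symm r).1 a (finProdFinEquiv.symm r).2
        (finProdFinEquiv.symm c).2
    else 0

end FinQuiver

/-!
Restricting an invariant function on `μ_α⁻¹(λ)` to the direct sums of a module of dimension `α_𝒥`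
and one of dimension `α_𝒦` is an isomorphism between the two coordinate rings.

It is injective because an invariant is constant on orbit closures, and every orbit closure contains
a direct sum: a one-parameter subgroup adapted to a composition series degenerates a module to its
associated graded module, whose arrows only join vertices in the support of a single composition
factor, hence never join `𝒥` to `𝒦`.

It is surjective because an invariant polynomial on the direct sums is the restriction of a
polynomial `f` on `Rep(Q̄,α)`, which the Reynolds operator makes invariant without changing its
restriction. That operator sends `f` to the function `x ↦ ⟨det ^ k, P_x⟩ / ⟨det ^ k, det ^ k⟩`,
where `det` is the product of the determinants at the vertices, `P_x(g) = det g ^ k * f (g • x)` is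
a polynomial in `g`, and `⟨·,·⟩` is the apolar pairing: the adjoint of right multiplication by `h`
for this pairing is right multiplication by the transpose of `h`, and `det ^ k` is an eigenvector of
all of these.
-/

namespace MatrixReynolds

open MvPolynomial Matrix
open scoped Nat Kronecker

section Apolar

variable {σ R S : Type*} [CommSemiring R] [CommSemiring S]

/-- The factorial `∏ i, (m i)!` of a multi-index. -/
def multiFactorial (m : σ →₀ ℕ) : ℕ := m.prod fun _ k => k !

theorem multiFactorial_pos (m : σ →₀ ℕ) : 0 < multiFactorial m :=
  Finset.prod_pos fun _ _ => Nat.factorial_pos _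

theorem multiFactorial_add_single (m : σ →₀ ℕ) (i : σ) :
    multiFactorial (m + Finsupp.single i 1) = (m i + 1) * multiFactorial m := by
  have herase : (m + Finsupp.single i 1).erase i = m.erase i := by
    simp [Finsupp.erase_add]
  have hsplit (m : σ →₀ ℕ) : multiFactorial m = (m i)! * multiFactorial (m.erase i) :=
    (Finsupp.mul_prod_erase' m i _ fun _ => Nat.factorial_zero).symm
  rw [hsplit, hsplit m, herase, Finsupp.add_apply, Finsupp.single_eq_same, Nat.factorial_succ,
    mul_assoc]

/-- The apolar pairing `⟨P, Q⟩ = ∑ m, m! P_m Q_m` on polynomials, for which multiplication by a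
variable is adjoint to the corresponding partial derivative. -/
def apolar : MvPolynomial σ R →ₗ[R] MvPolynomial σ R →ₗ[R] R :=
  (basisMonomials σ R).constr R fun m => (multiFactorial m : R) • lcoeff R m

theorem apolar_monomial_left (m : σ →₀ ℕ) (a : R) (Q : MvPolynomial σ R) :
    apolar (monomial m a) Q = a * (multiFactorial m * coeff m Q) := by
  have hm : monomial m a = a • basisMonomials σ R m := by simp [smul_monomial]
  rw [hm, map_smul, apolar, Module.Basis.constr_basis]
  simp [lcoeff]

theorem apolar_eq_sum (P Q : MvPolynomial σ R) :
    apolar P Q = ∑ m ∈ P.support, coeff m P * (multiFactorial m * coeff m Q) := by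
  conv_lhs => rw [P.as_sum, map_sum, LinearMap.sum_apply]
  exact Finset.sum_congr rfl fun m _ => apolar_monomial_left m _ Q

theorem apolar_C_left (a : R) (Q : MvPolynomial σ R) :
    apolar (C a) Q = a * constantCoeff Q := by
  rw [← monomial_zero', apolar_monomial_left, constantCoeff_eq]
  simp [multiFactorial]

theorem apolar_X_mul (i : σ) (P Q : MvPolynomial σ R) :
    apolar (X i * P) Q = apolar P (pderiv i Q) := by
  induction P using MvPolynomial.induction_on' with
  | monomial m a =>
    rw [X, monomial_mul, one_mul, add_comm, apolar_monomial_left, apolar_monomial_left,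
      coeff_pderiv, multiFactorial_add_single]
    push_cast
    ring
  | add P P' hP hP' => simp only [mul_add, map_add, LinearMap.add_apply, hP, hP']

theorem apolar_map (f : R →+* S) (P Q : MvPolynomial σ R) :
    apolar (map f P) (map f Q) = f (apolar P Q) := by
  induction P using MvPolynomial.induction_on' with
  | monomial m a => simp [apolar_monomial_left, coeff_map]
  | add P P' hP hP' => simp only [map_add, LinearMap.add_apply, hP, hP']

theorem apolar_self_pos {R : Type*} [CommRing R] [LinearOrder R] [IsStrictOrderedRing R]
    {P : MvPolynomial σ R} (hP : P ≠ 0) : 0 < apolar P P := by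
  rw [apolar_eq_sum]
  refine Finset.sum_pos (fun m hm => ?_) (by simpa using hP)
  have hfact : (0 : R) < multiFactorial m := mod_cast multiFactorial_pos m
  have hcoeff := mul_self_pos.mpr (mem_support_iff.mp hm)
  calc 0 < multiFactorial m * (coeff m P * coeff m P) := mul_pos hfact hcoeff
    _ = _ := by ring

section LinearSubstitution

variable {σ : Type*} [Fintype σ] (A : Matrix σ σ R)

theorem toMvPolynomial_eq_sum (i : σ) :
    A.toMvPolynomial i = ∑ j, C (A i j) * X j := by
  simp [Matrix.toMvPolynomial, C_mul_X_eq_monomial]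

theorem eval_bind₁_toMvPolynomial (x : σ → R) (P : MvPolynomial σ R) :
    eval x (bind₁ A.toMvPolynomial P) = eval (A *ᵥ x) P := by
  induction P using MvPolynomial.induction_on with
  | C a => simp
  | add P P' hP hP' => simp only [map_add, hP, hP']
  | mul_X P i hP => simp [hP, toMvPolynomial_eval_eq_apply]

theorem constantCoeff_bind₁_toMvPolynomial (P : MvPolynomial σ R) :
    constantCoeff (bind₁ A.toMvPolynomial P) = constantCoeff P := by
  induction P using MvPolynomial.induction_on with
  | C a => simp
  | add P P' hP hP' => simp only [map_add, hP, hP']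
  | mul_X P i _ => simp [toMvPolynomial_constantCoeff]

theorem pderiv_bind₁_toMvPolynomial (j : σ) (P : MvPolynomial σ R) :
    pderiv j (bind₁ A.toMvPolynomial P) =
      ∑ i, C (A i j) * bind₁ A.toMvPolynomial (pderiv i P) := by
  classical
  induction P using MvPolynomial.induction_on with
  | C a => simp
  | add P P' hP hP' => simp only [map_add, hP, hP', mul_add, Finset.sum_add_distrib]
  | mul_X P k hP =>
    have hX : pderiv j (bind₁ A.toMvPolynomial (X k)) =
        ∑ i, C (A i j) * bind₁ A.toMvPolynomial (pderiv i (X k)) := by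
      simp [toMvPolynomial_eq_sum, pderiv_X, Pi.single_apply, Derivation.leibniz, apply_ite]
    simp only [map_mul, pderiv_mul, hP, hX, map_add, mul_add, Finset.sum_mul, Finset.mul_sum,
      Finset.sum_add_distrib]
    congr 1 <;> exact Finset.sum_congr rfl fun i _ => by ring

theorem apolar_bind₁_transpose (P Q : MvPolynomial σ R) :
    apolar (bind₁ Aᵀ.toMvPolynomial P) Q = apolar P (bind₁ A.toMvPolynomial Q) := by
  induction P using MvPolynomial.induction_on generalizing Q with
  | C a => rw [bind₁_C_right, apolar_C_left, apolar_C_left, constantCoeff_bind₁_toMvPolynomial]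
  | add P P' hP hP' => simp only [map_add, LinearMap.add_apply, hP, hP']
  | mul_X P i hP =>
    rw [map_mul, bind₁_X_right, mul_comm, mul_comm P, apolar_X_mul, pderiv_bind₁_toMvPolynomial,
      toMvPolynomial_eq_sum, Finset.sum_mul, map_sum, map_sum, LinearMap.sum_apply]
    refine Finset.sum_congr rfl fun j _ => ?_
    rw [mul_assoc, ← smul_eq_C_mul, ← smul_eq_C_mul, map_smul, map_smul, LinearMap.smul_apply,
      apolar_X_mul, hP, transpose_apply]

end LinearSubstitution

end Apolar

section GenericTuple

variable {ι : Type*} {n : ι → Type*} {R S : Type*}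

/-- The coordinate vector of a tuple of square matrices. -/
def tupleCoord (g : ∀ i, Matrix (n i) (n i) R) (p : Σ i, n i × n i) : R :=
  g p.1 p.2.1 p.2.2

section CommSemiring

variable [CommSemiring R] [CommSemiring S]

/-- The tuple of square matrices whose entries are independent variables. -/
def genericTuple (n : ι → Type*) (R : Type*) [CommSemiring R] (i : ι) :
    Matrix (n i) (n i) (MvPolynomial (Σ i, n i × n i) R) :=
  of fun r s => X ⟨i, r, s⟩

theorem genericTuple_map_eval (g : ∀ i, Matrix (n i) (n i) R) (i : ι) :
    (genericTuple n R i).map (eval (tupleCoord g)) = g i := by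
  ext r s
  simp [genericTuple, tupleCoord]

theorem genericTuple_map_map (f : R →+* S) (i : ι) :
    (genericTuple n R i).map (MvPolynomial.map f) = genericTuple n S i := by
  ext1 r s
  simp [genericTuple]

variable [DecidableEq ι] [∀ i, DecidableEq (n i)]

/-- The matrix of right multiplication by `h` on coordinate vectors of tuples of matrices. -/
def rightMul (h : ∀ i, Matrix (n i) (n i) R) : Matrix (Σ i, n i × n i) (Σ i, n i × n i) R :=
  blockDiagonal' fun i => 1 ⊗ₖ (h i)ᵀ

theorem rightMul_transpose (h : ∀ i, Matrix (n i) (n i) R) :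
    (rightMul h)ᵀ = rightMul fun i => (h i)ᵀ := by
  rw [rightMul, blockDiagonal'_transpose, rightMul]
  congr! 2 with i
  rw [← kroneckerMap_transpose, transpose_one]

variable [Fintype ι] [∀ i, Fintype (n i)]

theorem rightMul_mulVec (g h : ∀ i, Matrix (n i) (n i) R) :
    rightMul h *ᵥ tupleCoord g = tupleCoord fun i => g i * h i := by
  ext ⟨i, r, s⟩
  simp only [mulVec, dotProduct, rightMul, Fintype.sum_sigma, tupleCoord, Matrix.mul_apply]
  rw [Finset.sum_eq_single i (fun j _ hj => by simp [blockDiagonal'_apply_ne _ _ _ hj.symm])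
    (by simp), Fintype.sum_prod_type, Finset.sum_eq_single r]
  · simp [blockDiagonal'_apply_eq, mul_comm]
  · intro r' _ hr
    simp [blockDiagonal'_apply_eq, Matrix.one_apply_ne hr.symm]
  · simp

theorem eval_bind₁_rightMul (g h : ∀ i, Matrix (n i) (n i) R)
    (P : MvPolynomial (Σ i, n i × n i) R) :
    eval (tupleCoord g) (bind₁ (rightMul h).toMvPolynomial P) =
      eval (tupleCoord fun i => g i * h i) P := by
  rw [eval_bind₁_toMvPolynomial, rightMul_mulVec]

end CommSemiring

section CommRing

variable [CommRing R] [CommRing S]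
variable [Fintype ι] [∀ i, Fintype (n i)] [∀ i, DecidableEq (n i)]

/-- The product of the determinants of a generic tuple of matrices. -/
def genericDet (n : ι → Type*) [∀ i, Fintype (n i)] [∀ i, DecidableEq (n i)] (R : Type*)
    [CommRing R] : MvPolynomial (Σ i, n i × n i) R :=
  ∏ i, (genericTuple n R i).det

theorem eval_genericDet (g : ∀ i, Matrix (n i) (n i) R) :
    eval (tupleCoord g) (genericDet n R) = ∏ i, (g i).det := by
  simp only [genericDet, map_prod, RingHom.map_det, RingHom.mapMatrix_apply, genericTuple_map_eval]

theorem map_genericDet (f : R →+* S) :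
    MvPolynomial.map f (genericDet n R) = genericDet n S := by
  simp only [genericDet, map_prod, RingHom.map_det, RingHom.mapMatrix_apply, genericTuple_map_map]

theorem genericDet_ne_zero [Nontrivial R] : genericDet n R ≠ 0 := fun h => by
  simpa [h] using eval_genericDet (n := n) (R := R) fun _ => 1

theorem apolar_genericDet_pow_ne_zero [CharZero R] (k : ℕ) :
    apolar (genericDet n R ^ k) (genericDet n R ^ k) ≠ 0 := by
  have hpos := apolar_self_pos (pow_ne_zero k (genericDet_ne_zero (n := n) (R := ℤ)))
  have hmap := apolar_map (Int.castRingHom R) (genericDet n ℤ ^ k) (genericDet n ℤ ^ k)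
  rw [map_pow, map_genericDet] at hmap
  rw [hmap, eq_intCast]
  exact Int.cast_ne_zero.mpr hpos.ne'

end CommRing

section Field

variable [∀ i, Fintype (n i)] [∀ i, DecidableEq (n i)]
variable {K : Type*} [Field K]

theorem funext_of_eval_units [Finite ι] [Infinite K] {P P' : MvPolynomial (Σ i, n i × n i) K}
    (h : ∀ g : ∀ i, GL (n i) K,
      eval (tupleCoord fun i => (g i : Matrix (n i) (n i) K)) P =
        eval (tupleCoord fun i => (g i : Matrix (n i) (n i) K)) P') : P = P' := by
  cases nonempty_fintype ι
  refine mul_left_cancel₀ (genericDet_ne_zero (n := n)) (MvPolynomial.funext fun x => ?_)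
  let g i : Matrix (n i) (n i) K := of fun r s => x ⟨i, r, s⟩
  change eval (tupleCoord g) _ = eval (tupleCoord g) _
  rw [map_mul, map_mul, eval_genericDet]
  by_cases hdet : ∏ i, (g i).det = 0
  · simp only [hdet, zero_mul]
  · have hg i : (g i).det ≠ 0 := Finset.prod_ne_zero_iff.mp hdet i (Finset.mem_univ i)
    exact congrArg _ (h fun i => GeneralLinearGroup.mkOfDetNeZero (g i) (hg i))

variable [Fintype ι] [DecidableEq ι]

theorem bind₁_rightMul_genericDet [Infinite K] (h : ∀ i, Matrix (n i) (n i) K) :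
    bind₁ (rightMul h).toMvPolynomial (genericDet n K) = C (∏ i, (h i).det) * genericDet n K :=
  funext_of_eval_units fun g => by
    simp only [eval_bind₁_rightMul, eval_genericDet, map_mul, eval_C, det_mul,
      Finset.prod_mul_distrib, mul_comm]

theorem apolar_genericDet_pow_eq [CharZero K] (g : ∀ i, Matrix (n i) (n i) K)
    (hg : ∏ i, (g i).det ≠ 0) {k : ℕ} {P P' : MvPolynomial (Σ i, n i × n i) K}
    (hP : bind₁ (rightMul g).toMvPolynomial P = C ((∏ i, (g i).det) ^ k) * P') :
    apolar (genericDet n K ^ k) P' = apolar (genericDet n K ^ k) P := by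
  refine mul_left_cancel₀ (pow_ne_zero k hg) ?_
  calc (∏ i, (g i).det) ^ k * apolar (genericDet n K ^ k) P'
      = apolar (genericDet n K ^ k) (bind₁ (rightMul g).toMvPolynomial P) := by
        rw [hP, ← smul_eq_C_mul, map_smul, smul_eq_mul]
    _ = apolar (bind₁ (rightMul fun i => (g i)ᵀ).toMvPolynomial (genericDet n K ^ k)) P := by
        rw [← rightMul_transpose, apolar_bind₁_transpose]
    _ = (∏ i, (g i).det) ^ k * apolar (genericDet n K ^ k) P := by
        simp only [map_pow, bind₁_rightMul_genericDet, det_transpose, ← smul_eq_C_mul, smul_pow,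
          map_smul, LinearMap.smul_apply, smul_eq_mul]

end Field

end GenericTuple

section Reynolds

/-- The subalgebra of the elements of `F` that a power of `d` carries into `B`, that is, of those
which are fractions of elements of `B` with denominator a power of `d`. -/
def powerFractions {K F : Type*} [CommSemiring K] [CommSemiring F] [Algebra K F]
    (B : Subalgebra K F) (d : B) : Subalgebra K F where
  carrier := {f | ∃ k : ℕ, (d : F) ^ k * f ∈ B}
  mul_mem' := by
    rintro f f' ⟨k, hk⟩ ⟨k', hk'⟩
    refine ⟨k + k', ?_⟩
    have := B.mul_mem hk hk'
    rwa [mul_mul_mul_comm, ← pow_add] at this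
  add_mem' := by
    rintro f f' ⟨k, hk⟩ ⟨k', hk'⟩
    refine ⟨k + k', ?_⟩
    have := B.add_mem (B.mul_mem (pow_mem d.2 k') hk) (B.mul_mem (pow_mem d.2 k) hk')
    convert this using 1
    ring
  algebraMap_mem' c := ⟨0, by simp⟩

theorem le_powerFractions {K F : Type*} [CommSemiring K] [CommSemiring F] [Algebra K F]
    (B : Subalgebra K F) (d : B) : B ≤ powerFractions B d :=
  fun f hf => ⟨0, by simpa using hf⟩

variable {ι : Type*} {n : ι → Type*} [∀ i, Fintype (n i)] [∀ i, DecidableEq (n i)]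
variable {K : Type*} [Field K] {X : Type*}

/-- Evaluation at a point of `X`, on an algebra of functions on `X`. -/
def evalAt (A : Subalgebra K (X → K)) (x : X) : A →ₐ[K] K :=
  (Pi.evalAlgHom K (fun _ => K) x).comp A.val

/-- A polynomial in the entries of a tuple of matrices with coefficients in an algebra `A` of
functions on `X`, viewed as a function on `∏ i, GL (n i) K × X`. -/
def evalUnits (n : ι → Type*) [∀ i, Fintype (n i)] [∀ i, DecidableEq (n i)]
    (A : Subalgebra K (X → K)) :
    MvPolynomial (Σ i, n i × n i) A →ₐ[K] ((∀ i, GL (n i) K) × X → K) :=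
  AlgHom.pi fun p => (MvPolynomial.aeval (tupleCoord fun i => (p.1 i).val)).comp
    (mapAlgHom (evalAt A p.2))

theorem evalUnits_apply {A : Subalgebra K (X → K)} (P : MvPolynomial (Σ i, n i × n i) A)
    (p : (∀ i, GL (n i) K) × X) :
    evalUnits n A P p =
      eval (tupleCoord fun i => (p.1 i).val) (MvPolynomial.map (evalAt A p.2 : A →+* K) P) :=
  rfl

variable [Fintype ι]

theorem evalUnits_genericDet (A : Subalgebra K (X → K)) (p : (∀ i, GL (n i) K) × X) :
    evalUnits n A (genericDet n A) p = ∏ i, (p.1 i).val.det := by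
  rw [evalUnits_apply, map_genericDet, eval_genericDet]

/-- The functions on `∏ i, GL (n i) K × X` which are polynomial in the entries of the matrices and
the inverses of their determinants, with coefficients in the algebra `A` of functions on `X`. -/
def regularFunctions (n : ι → Type*) [∀ i, Fintype (n i)] [∀ i, DecidableEq (n i)]
    (A : Subalgebra K (X → K)) : Subalgebra K ((∀ i, GL (n i) K) × X → K) :=
  powerFractions (evalUnits n A).range ⟨_, genericDet n A, rfl⟩

theorem comp_snd_mem_regularFunctions {A : Subalgebra K (X → K)} {f : X → K} (hf : f ∈ A) :
    (fun p => f p.2) ∈ regularFunctions n A :=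
  le_powerFractions _ _ ⟨C ⟨f, hf⟩, by ext; simp [evalUnits_apply, evalAt]⟩

theorem entry_mem_regularFunctions (A : Subalgebra K (X → K)) (i : ι) (r s : n i) :
    (fun p => (p.1 i).val r s) ∈ regularFunctions n A :=
  le_powerFractions _ _ ⟨MvPolynomial.X ⟨i, r, s⟩, by ext; simp [evalUnits_apply, tupleCoord]⟩

theorem inv_entry_mem_regularFunctions (A : Subalgebra K (X → K)) (i : ι) (r s : n i) :
    (fun p => (p.1 i)⁻¹.val r s) ∈ regularFunctions n A := by
  classical
  let M j : Matrix (n j) (n j) ((∀ i, GL (n i) K) × X → K) := of fun r s p => (p.1 j).val r s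
  let N : Matrix (n i) (n i) ((∀ i, GL (n i) K) × X → K) := of fun r s p => (p.1 i)⁻¹.val r s
  have hM j : (evalUnits n A).mapMatrix (genericTuple n A j) = M j := by
    ext
    simp [M, genericTuple, evalUnits_apply, tupleCoord]
  have hdet j : evalUnits n A (genericTuple n A j).det = (M j).det := by
    rw [← hM]
    exact (evalUnits n A).map_det (genericTuple n A j)
  have hadj : evalUnits n A ((genericTuple n A i).adjugate r s) = (M i).adjugate r s := by
    rw [← hM]
    exact congrFun₂ ((evalUnits n A).map_adjugate (genericTuple n A i)) r s
  have hMN : M i * N = 1 := by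
    ext r s p
    have h := congrFun₂ (Units.mul_inv (p.1 i)) r s
    simp only [M, N, Matrix.mul_apply, of_apply, Finset.sum_apply, Pi.mul_apply, one_apply] at h ⊢
    rw [h]
    split_ifs <;> rfl
  have hN : (M i).adjugate = (M i).det • N := by
    rw [← mul_one (M i).adjugate, ← hMN, ← Matrix.mul_assoc, adjugate_mul, smul_mul, one_mul]
  refine ⟨1, (∏ j ∈ Finset.univ.erase i, (genericTuple n A j).det) *
    (genericTuple n A i).adjugate r s, ?_⟩
  calc evalUnits n A ((∏ j ∈ Finset.univ.erase i, (genericTuple n A j).det) *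
        (genericTuple n A i).adjugate r s)
      = (∏ j ∈ Finset.univ.erase i, (M j).det) * (M i).adjugate r s := by
        simp only [map_mul, map_prod, hdet, hadj]
    _ = (∏ j, (M j).det) * N r s := by
        rw [hN, ← Finset.prod_erase_mul _ _ (Finset.mem_univ i), mul_assoc]
        rfl
    _ = evalUnits n A (genericDet n A) ^ 1 * N r s := by
        simp only [pow_one, genericDet, map_prod, hdet]

/-- Lift `f` by the Reynolds operator: clear the denominator of `g ↦ f (g • x)` and pair it with the
corresponding power of the determinant. -/
theorem exists_invariant_eqOn [CharZero K] [MulAction (∀ i, GL (n i) K) X]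
    {A : Subalgebra K (X → K)}
    (hA : ∀ f ∈ A, (fun p : (∀ i, GL (n i) K) × X => f (p.1 • p.2)) ∈ regularFunctions n A)
    {f : X → K} (hf : f ∈ A) {Y : Set X}
    (hY : ∀ y ∈ Y, ∀ g : ∀ i, GL (n i) K, f (g • y) = f y) :
    ∃ h ∈ A, (∀ (g : ∀ i, GL (n i) K) x, h (g • x) = h x) ∧ Set.EqOn h f Y := by
  classical
  obtain ⟨k, P, hP⟩ := hA f hf
  let c := apolar (genericDet n K ^ k) (genericDet n K ^ k)
  have hc : c ≠ 0 := apolar_genericDet_pow_ne_zero k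
  let Px x := MvPolynomial.map (evalAt A x : A →+* K) P
  have hPx (g : ∀ i, GL (n i) K) (x : X) :
      eval (tupleCoord fun i => (g i).val) (Px x) = (∏ i, (g i).val.det) ^ k * f (g • x) := by
    rw [← evalUnits_genericDet A (g, x)]
    exact congrFun hP (g, x)
  let h : A := c⁻¹ • apolar (genericDet n A ^ k) P
  have hh x : h.val x = c⁻¹ * apolar (genericDet n K ^ k) (Px x) := by
    rw [← map_genericDet (evalAt A x : A →+* K), ← map_pow, apolar_map]
    rfl
  refine ⟨h, h.2, fun g x => ?_, fun y hy => ?_⟩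
  · have hdet : ∏ i, (g i).val.det ≠ 0 := Finset.prod_ne_zero_iff.mpr fun i _ =>
      ((isUnit_iff_isUnit_det _).mp (g i).isUnit).ne_zero
    have hg : bind₁ (rightMul fun i => (g i).val).toMvPolynomial (Px x) =
        C ((∏ i, (g i).val.det) ^ k) * Px (g • x) := funext_of_eval_units fun g' => by
      have hmul := hPx (g' * g) x
      simp only [Pi.mul_apply, Units.val_mul, det_mul, Finset.prod_mul_distrib, mul_smul] at hmul
      rw [eval_bind₁_rightMul, hmul, map_mul, eval_C, hPx]
      ring
    rw [hh, hh, apolar_genericDet_pow_eq _ hdet hg]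
  · have hy : Px y = f y • genericDet n K ^ k := funext_of_eval_units fun g => by
      rw [hPx, hY y hy, smul_eval, map_pow, eval_genericDet, mul_comm]
    rw [hh, hy, map_smul, smul_eq_mul, mul_left_comm, inv_mul_cancel₀ hc, mul_one]

end Reynolds

end MatrixReynolds

namespace SplitFiltration

section Splitting

variable {K V : Type*} [DivisionRing K] [AddCommGroup V] [Module K V]

theorem exists_isProj (W : Submodule K V) : ∃ f : Module.End K V, LinearMap.IsProj W f := by
  obtain ⟨f, hf⟩ := W.subtype.exists_leftInverse_of_injective W.ker_subtype
  exact ⟨W.subtype ∘ₗ f, fun v => (f v).2, fun v hv => by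
    simpa using congrArg Subtype.val (LinearMap.congr_fun hf ⟨v, hv⟩)⟩

theorem mul_eq_right_of_isProj {W W' : Submodule K V} {p p' : Module.End K V}
    (hp : LinearMap.IsProj W p) (hp' : LinearMap.IsProj W' p') (h : W' ≤ W) : p * p' = p' :=
  LinearMap.ext fun v => hp.map_id _ (h (hp'.map_mem v))

theorem exists_nested_isProj {U : ℕ → Submodule K V} (hU : Antitone U) (h0 : U 0 = ⊤) :
    ∃ q : ℕ → Module.End K V, (∀ m, LinearMap.IsProj (U m) (q m)) ∧
      ∀ m m', m ≤ m' → q m' * q m = q m' := by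
  choose ρ hρ using fun m => exists_isProj (U m)
  let q : ℕ → Module.End K V := fun m => Nat.rec 1 (fun m p => ρ (m + 1) * p) m
  have hq : ∀ m, LinearMap.IsProj (U m) (q m) := by
    intro m
    induction m with
    | zero => exact ⟨fun v => h0 ▸ Submodule.mem_top, fun v _ => rfl⟩
    | succ m ih => exact ⟨fun v => (hρ _).map_mem _, fun v hv =>
        (congrArg _ (ih.map_id v (hU m.le_succ hv))).trans ((hρ _).map_id v hv)⟩
  refine ⟨q, hq, fun m m' h => ?_⟩
  induction m', h using Nat.le_induction with
  | base => exact mul_eq_right_of_isProj (hq m) (hq m) le_rfl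
  | succ m' _ ih => exact (mul_assoc _ _ _).trans (congrArg _ ih)

/-- The idempotents `e` split the descending filtration `U 0 ≥ ⋯ ≥ U N`: each `e k` is a
projection onto a complement of `U (k + 1)` in `U k`. -/
structure IsSplitting (U : ℕ → Submodule K V) {N : ℕ} (e : Fin N → Module.End K V) : Prop where
  idempotents : CompleteOrthogonalIdempotents e
  apply_mem : ∀ (k : Fin N) v, e k v ∈ U k
  apply_eq_zero : ∀ k : Fin N, ∀ v ∈ U (k + 1), e k v = 0

theorem exists_isSplitting {U : ℕ → Submodule K V} (hU : Antitone U) (h0 : U 0 = ⊤) {N : ℕ}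
    (hN : U N = ⊥) : ∃ e : Fin N → Module.End K V, IsSplitting U e := by
  obtain ⟨q, hq, hle⟩ := exists_nested_isProj hU h0
  have hge m m' (h : m ≤ m') : q m * q m' = q m' := mul_eq_right_of_isProj (hq m) (hq m') (hU h)
  have hq0 : q 0 = 1 := LinearMap.ext fun v => (hq 0).map_id v (h0 ▸ Submodule.mem_top)
  have hqN : q N = 0 := LinearMap.ext fun v => by simpa [hN] using (hq N).map_mem v
  refine ⟨fun k => q k - q (k + 1),
    CompleteOrthogonalIdempotents.iff_ortho_complete.mpr ⟨fun j k hjk => ?_, ?_⟩, fun k v =>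
      (U k).sub_mem ((hq k).map_mem v) (hU (Nat.le_succ k) ((hq (k + 1)).map_mem v)),
    fun k v hv => ?_⟩
  · rcases lt_or_gt_of_ne (Fin.val_ne_of_ne hjk) with h | h
    · simp only [sub_mul, mul_sub, hge j k h.le, hge j (k + 1) (by lia), hge (j + 1) k h,
        hge (j + 1) (k + 1) (by lia), sub_self]
    · simp only [sub_mul, mul_sub, hle k j h.le, hle k (j + 1) (by lia), hle (k + 1) j h,
        hle (k + 1) (j + 1) (by lia), sub_self]
  · rw [Fin.sum_univ_eq_sum_range fun k => q k - q (k + 1), Finset.sum_range_sub', hq0, hqN,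
      sub_zero]
  · rw [LinearMap.sub_apply, (hq k).map_id v (hU (Nat.le_succ k) hv), (hq (k + 1)).map_id v hv,
      sub_self]

theorem IsSplitting.eq_zero_of_eq {U : ℕ → Submodule K V} {N : ℕ} {e : Fin N → Module.End K V}
    (he : IsSplitting U e) {k : Fin N} (hk : U (k + 1) = U k) : e k = 0 := by
  rw [← (he.idempotents.idem k).eq]
  exact LinearMap.ext fun v => he.apply_eq_zero k _ (hk ▸ he.apply_mem k v)

end Splitting

section Torus

variable {K R : Type*} [Field K] [Ring R] [Algebra K R] {N : ℕ} {e : Fin N → R}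

theorem sum_smul_mul_sum_smul (he : CompleteOrthogonalIdempotents e) (c d : Fin N → K) :
    (∑ k, c k • e k) * ∑ k, d k • e k = ∑ k, (c k * d k) • e k := by
  simp only [Finset.sum_mul_sum, smul_mul_smul_comm, he.mul_eq, smul_ite, smul_zero,
    Finset.sum_ite_eq, Finset.mem_univ, if_true]

/-- The one-parameter subgroup of `Rˣ` acting with weight `k` on the summand cut out by the
idempotent `e k`. -/
def oneParameterSubgroup (he : CompleteOrthogonalIdempotents e) (t : Kˣ) : Rˣ where
  val := ∑ k : Fin N, (t : K) ^ (k : ℕ) • e k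
  inv := ∑ k : Fin N, (t⁻¹ : K) ^ (k : ℕ) • e k
  val_inv := by simp [sum_smul_mul_sum_smul he, he.complete]
  inv_val := by simp [sum_smul_mul_sum_smul he, he.complete]

end Torus

section Degeneration

variable {K m n : Type*} [Field K] [Fintype m] [Fintype n] {N : ℕ}

/-- For a matrix `M` respecting the filtrations split by `e` and `e'`, the polynomial extension to
`t = 0` of the curve obtained by letting the one-parameter subgroups of `e` and `e'` act on `M`. The
truncation of `k - j` is harmless, because the summands with `k < j` vanish for such `M`. -/
def degeneration (e : Fin N → Matrix m m K) (e' : Fin N → Matrix n n K) (M : Matrix m n K)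
    (t : K) : Matrix m n K :=
  ∑ k : Fin N, ∑ j : Fin N, t ^ (k - j : ℕ) • (e k * M * e' j)

variable {e : Fin N → Matrix m m K} {e' : Fin N → Matrix n n K} {M : Matrix m n K}

theorem degeneration_eq_mul [DecidableEq m] [DecidableEq n]
    (he : CompleteOrthogonalIdempotents e) (he' : CompleteOrthogonalIdempotents e')
    (hM : ∀ k j, k < j → e k * M * e' j = 0) (t : Kˣ) :
    degeneration e e' M t =
      (oneParameterSubgroup he t).val * M * (oneParameterSubgroup he' t)⁻¹.val := by
  change _ = (∑ k : Fin N, (t : K) ^ (k : ℕ) • e k) * M * ∑ k : Fin N, (t⁻¹ : K) ^ (k : ℕ) • e' k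
  simp only [degeneration, Matrix.sum_mul, Matrix.mul_sum]
  rw [Finset.sum_comm]
  refine Finset.sum_congr rfl fun j _ => Finset.sum_congr rfl fun k _ => ?_
  rw [Matrix.smul_mul, Matrix.smul_mul, Matrix.mul_smul, smul_smul]
  rcases lt_or_ge k j with h | h
  · rw [hM k j h, smul_zero, smul_zero]
  · rw [pow_sub₀ _ t.ne_zero h, inv_pow]

theorem degeneration_zero (hM : ∀ k j, k < j → e k * M * e' j = 0) :
    degeneration e e' M 0 = ∑ k, e k * M * e' k := by
  refine Finset.sum_congr rfl fun k _ => ?_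
  rw [Finset.sum_eq_single k _ (by simp)]
  · simp
  · intro j _ hjk
    rcases lt_or_gt_of_ne hjk with h | h
    · rw [zero_pow (Nat.sub_ne_zero_of_lt h), zero_smul]
    · rw [hM k j h, smul_zero]

end Degeneration

end SplitFiltration

section FunctionAlgebras

variable {K X Y : Type*} [Field K]

/-- Precomposition with a map `ψ`, as a homomorphism between algebras of functions. -/
def precompAlgHom (K : Type*) [Field K] (ψ : Y → X) : (X → K) →ₐ[K] (Y → K) :=
  AlgHom.pi fun y => Pi.evalAlgHom K (fun _ => K) (ψ y)

theorem range_aeval_le {σ S : Type*} [CommRing S] [Algebra K S] {c : σ → S} {T : Subalgebra K S}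
    (h : ∀ i, c i ∈ T) : (MvPolynomial.aeval (R := K) c).range ≤ T := by
  rw [← Algebra.adjoin_range_eq_range_aeval]
  exact Algebra.adjoin_le (Set.range_subset_iff.mpr h)

theorem mul_apply_mem {m n p : Type*} [Fintype n] {T : Subalgebra K (X → K)}
    {M : X → Matrix m n K} {N : X → Matrix n p K} (hM : ∀ r s, (fun x => M x r s) ∈ T)
    (hN : ∀ r s, (fun x => N x r s) ∈ T) (r : m) (s : p) : (fun x => (M x * N x) r s) ∈ T := by
  have h := T.sum_mem fun (u : n) (_ : u ∈ Finset.univ) => T.mul_mem (hM r u) (hN u s)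
  convert h using 1
  ext x
  simp [Matrix.mul_apply]

/-- The polynomial functions on the affine line. -/
def lineFunctions (K : Type*) [Field K] : Subalgebra K (K → K) :=
  (Polynomial.aeval (id : K → K)).range

theorem id_mem_lineFunctions : (id : K → K) ∈ lineFunctions K :=
  ⟨Polynomial.X, Polynomial.aeval_X _⟩

theorem degeneration_apply_mem_lineFunctions {m n : Type*} [Fintype m] [Fintype n] {N : ℕ}
    (e : Fin N → Matrix m m K) (e' : Fin N → Matrix n n K) (M : Matrix m n K) (r : m) (s : n) :
    (fun t => SplitFiltration.degeneration e e' M t r s) ∈ lineFunctions K := by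
  have h := (lineFunctions K).sum_mem fun (k : Fin N) (_ : k ∈ Finset.univ) =>
    sum_mem fun (j : Fin N) (_ : j ∈ Finset.univ) =>
      (lineFunctions K).smul_mem (pow_mem id_mem_lineFunctions (k - j : ℕ)) ((e k * M * e' j) r s)
  convert h using 1
  ext t
  simp [SplitFiltration.degeneration, Matrix.sum_apply, mul_comm]

theorem eq_of_mem_lineFunctions [Infinite K] {f : K → K} (hf : f ∈ lineFunctions K) {c : K}
    (h : ∀ t ≠ 0, f t = c) : f 0 = c := by
  obtain ⟨P, rfl⟩ := hf
  have heval t : Polynomial.aeval (id : K → K) P t = P.eval t := by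
    induction P using Polynomial.induction_on' <;> simp_all
  have hP : P = Polynomial.C c := Polynomial.eq_of_infinite_eval_eq _ _ <|
    (Set.finite_singleton (0 : K)).infinite_compl.mono fun t ht => by
      simpa [heval] using h t ht
  simp [hP]

end FunctionAlgebras

namespace FinQuiver

open Matrix MatrixReynolds SplitFiltration

section BlockDiagonal

variable {K : Type*} [Field K] {m m' m'' n n' n'' : ℕ}

/-- The block diagonal matrix with two given blocks, as a linear function of the pair of blocks;
its rows and columns are indexed by `Fin` of the sum of the sizes. -/
def finBlockDiagonal : Matrix (Fin m) (Fin m') K × Matrix (Fin n) (Fin n') K →ₗ[K]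
    Matrix (Fin (m + n)) (Fin (m' + n')) K where
  toFun p := (fromBlocks p.1 0 0 p.2).submatrix finSumFinEquiv.symm finSumFinEquiv.symm
  map_add' p q := Matrix.ext fun r s => by
    cases r using Fin.addCases <;> cases s using Fin.addCases <;> simp
  map_smul' c p := Matrix.ext fun r s => by
    cases r using Fin.addCases <;> cases s using Fin.addCases <;> simp

theorem finBlockDiagonal_apply
    (p : Matrix (Fin m) (Fin m') K × Matrix (Fin n) (Fin n') K) :
    finBlockDiagonal p =
      (fromBlocks p.1 0 0 p.2).submatrix finSumFinEquiv.symm finSumFinEquiv.symm :=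
  rfl

theorem finBlockDiagonal_castAdd_castAdd
    (p : Matrix (Fin m) (Fin m') K × Matrix (Fin n) (Fin n') K) (r : Fin m) (s : Fin m') :
    finBlockDiagonal p (Fin.castAdd n r) (Fin.castAdd n' s) = p.1 r s := by
  simp [finBlockDiagonal_apply]

theorem finBlockDiagonal_natAdd_natAdd
    (p : Matrix (Fin m) (Fin m') K × Matrix (Fin n) (Fin n') K) (r : Fin n) (s : Fin n') :
    finBlockDiagonal p (Fin.natAdd m r) (Fin.natAdd m' s) = p.2 r s := by
  simp [finBlockDiagonal_apply]

theorem finBlockDiagonal_castAdd_natAdd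
    (p : Matrix (Fin m) (Fin m') K × Matrix (Fin n) (Fin n') K) (r : Fin m) (s : Fin n') :
    finBlockDiagonal p (Fin.castAdd n r) (Fin.natAdd m' s) = 0 := by
  simp [finBlockDiagonal_apply]

theorem finBlockDiagonal_natAdd_castAdd
    (p : Matrix (Fin m) (Fin m') K × Matrix (Fin n) (Fin n') K) (r : Fin n) (s : Fin m') :
    finBlockDiagonal p (Fin.natAdd m r) (Fin.castAdd n' s) = 0 := by
  simp [finBlockDiagonal_apply]

theorem finBlockDiagonal_apply_mem {Y : Type*} {T : Submodule K (Y → K)}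
    {p : Y → Matrix (Fin m) (Fin m') K × Matrix (Fin n) (Fin n') K}
    (h₁ : ∀ r s, (fun y => (p y).1 r s) ∈ T) (h₂ : ∀ r s, (fun y => (p y).2 r s) ∈ T) (r s) :
    (fun y => finBlockDiagonal (p y) r s) ∈ T := by
  cases r using Fin.addCases <;> cases s using Fin.addCases
  · simpa only [finBlockDiagonal_castAdd_castAdd] using h₁ _ _
  · simp only [finBlockDiagonal_castAdd_natAdd]
    exact T.zero_mem
  · simp only [finBlockDiagonal_natAdd_castAdd]
    exact T.zero_mem
  · simpa only [finBlockDiagonal_natAdd_natAdd] using h₂ _ _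

theorem finBlockDiagonal_injective : Function.Injective
    (finBlockDiagonal : Matrix (Fin m) (Fin m') K × Matrix (Fin n) (Fin n') K →ₗ[K] _) :=
  fun p q h => by
    have hblocks := (Matrix.reindex finSumFinEquiv finSumFinEquiv).injective h
    obtain ⟨hfst, -, -, hsnd⟩ := Matrix.fromBlocks_inj.mp hblocks
    exact Prod.ext hfst hsnd

theorem finBlockDiagonal_mul (M : Matrix (Fin m) (Fin m') K) (N : Matrix (Fin n) (Fin n') K)
    (M' : Matrix (Fin m') (Fin m'') K) (N' : Matrix (Fin n') (Fin n'') K) :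
    finBlockDiagonal (M, N) * finBlockDiagonal (M', N') = finBlockDiagonal (M * M', N * N') := by
  simp only [finBlockDiagonal_apply, Matrix.submatrix_mul_equiv, Matrix.fromBlocks_multiply,
    Matrix.mul_zero, Matrix.zero_mul, add_zero, zero_add]

theorem finBlockDiagonal_one :
    finBlockDiagonal ((1 : Matrix (Fin m) (Fin m) K), (1 : Matrix (Fin n) (Fin n) K)) = 1 := by
  rw [finBlockDiagonal_apply, Matrix.fromBlocks_one, Matrix.submatrix_one_equiv]

theorem exists_finBlockDiagonal_eq {M : Matrix (Fin (m + n)) (Fin (m' + n')) K}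
    (h₁₂ : ∀ r s, M (Fin.castAdd n r) (Fin.natAdd m' s) = 0)
    (h₂₁ : ∀ r s, M (Fin.natAdd m r) (Fin.castAdd n' s) = 0) :
    ∃ p, finBlockDiagonal p = M := by
  refine ⟨(M.submatrix (Fin.castAdd n) (Fin.castAdd n'),
    M.submatrix (Fin.natAdd m) (Fin.natAdd m')), Matrix.ext fun r s => ?_⟩
  cases r using Fin.addCases <;> cases s using Fin.addCases <;>
    simp [finBlockDiagonal_castAdd_castAdd, finBlockDiagonal_castAdd_natAdd,
      finBlockDiagonal_natAdd_castAdd, finBlockDiagonal_natAdd_natAdd, h₁₂, h₂₁]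

/-- The block diagonal matrix with two given invertible blocks. -/
def glBlockDiagonal (g : GL (Fin m) K) (g' : GL (Fin n) K) : GL (Fin (m + n)) K where
  val := finBlockDiagonal (g.val, g'.val)
  inv := finBlockDiagonal (g⁻¹.val, g'⁻¹.val)
  val_inv := by
    rw [finBlockDiagonal_mul, Units.mul_inv, Units.mul_inv, finBlockDiagonal_one]
  inv_val := by
    rw [finBlockDiagonal_mul, Units.inv_mul, Units.inv_mul, finBlockDiagonal_one]

theorem exists_glBlockDiagonal_eq (h : m = 0 ∨ n = 0) (g : GL (Fin (m + n)) K) :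
    ∃ g₁ g₂, glBlockDiagonal g₁ g₂ = g := by
  have hblocks (M : Matrix (Fin (m + n)) (Fin (m + n)) K) : ∃ p, finBlockDiagonal p = M :=
    exists_finBlockDiagonal_eq (fun r s => by have := r.pos; have := s.pos; lia)
      fun r s => by have := r.pos; have := s.pos; lia
  obtain ⟨⟨A, B⟩, hg⟩ := hblocks g.val
  obtain ⟨⟨A', B'⟩, hg'⟩ := hblocks g⁻¹.val
  have hval : (A * A', B * B') = 1 := finBlockDiagonal_injective <| by
    rw [← finBlockDiagonal_mul, hg, hg', Units.mul_inv]
    exact finBlockDiagonal_one.symm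
  have hinv : (A' * A, B' * B) = 1 := finBlockDiagonal_injective <| by
    rw [← finBlockDiagonal_mul, hg, hg', Units.inv_mul]
    exact finBlockDiagonal_one.symm
  exact ⟨⟨A, A', congrArg Prod.fst hval, congrArg Prod.fst hinv⟩,
    ⟨B, B', congrArg Prod.snd hval, congrArg Prod.snd hinv⟩, Units.ext hg⟩

end BlockDiagonal

variable {Q : FinQuiver} {K : Type} [Field K] {α : Q.I → ℕ}

section Action

/-- The action `glAct`. It is stated for the product of the groups `GL`, of which the definition
`Gl` does not inherit the group structure. -/
instance : MulAction (∀ i, GL (Fin (α i)) K) (Q.Rep K α) where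
  smul g x := Q.glAct K α g x
  one_smul x := funext fun a => by
    change (1 : GL (Fin (α (Q.dh a))) K).val * x a * (1 : GL (Fin (α (Q.dt a))) K)⁻¹.val = x a
    rw [inv_one, Units.val_one, Units.val_one, Matrix.one_mul, Matrix.mul_one]
  mul_smul g g' x := funext fun a => by
    change (g (Q.dh a) * g' (Q.dh a)).val * x a * (g (Q.dt a) * g' (Q.dt a))⁻¹.val =
      (g (Q.dh a)).val * ((g' (Q.dh a)).val * x a * (g' (Q.dt a))⁻¹.val) * (g (Q.dt a))⁻¹.val
    simp only [_root_.mul_inv_rev, Units.val_mul, Matrix.mul_assoc]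

theorem smul_apply (g : ∀ i, GL (Fin (α i)) K) (x : Q.Rep K α) (a : Q.DA) :
    (g • x) a = (g (Q.dh a)).val * x a * (g (Q.dt a))⁻¹.val :=
  rfl

/-- The polynomial functions on `Rep(Q̄,α)`. -/
def repFunctions (Q : FinQuiver) (K : Type) [Field K] (α : Q.I → ℕ) :
    Subalgebra K (Q.Rep K α → K) :=
  (MvPolynomial.aeval fun (c : Q.Coords α) (x : Q.Rep K α) => x c.1 c.2.1 c.2.2).range

theorem entry_mem_repFunctions (a : Q.DA) (r : Fin (α (Q.dh a))) (s : Fin (α (Q.dt a))) :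
    (fun x : Q.Rep K α => x a r s) ∈ repFunctions Q K α :=
  ⟨MvPolynomial.X ⟨a, r, s⟩, MvPolynomial.aeval_X _ _⟩

theorem comp_mem_of_mem_repFunctions {Y : Type*} {ψ : Y → Q.Rep K α} {T : Subalgebra K (Y → K)}
    (hψ : ∀ a r s, (fun y => ψ y a r s) ∈ T) {F : Q.Rep K α → K} (hF : F ∈ repFunctions Q K α) :
    F ∘ ψ ∈ T :=
  range_aeval_le (T := T.comap (precompAlgHom K ψ)) (fun c => hψ c.1 c.2.1 c.2.2) hF

theorem comp_smul_mem_regularFunctions {F : Q.Rep K α → K} (hF : F ∈ repFunctions Q K α) :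
    (fun p : (∀ i, GL (Fin (α i)) K) × Q.Rep K α => F (p.1 • p.2)) ∈
      regularFunctions (fun i => Fin (α i)) (repFunctions Q K α) :=
  comp_mem_of_mem_repFunctions (fun a => mul_apply_mem (mul_apply_mem
    (entry_mem_regularFunctions (n := fun i => Fin (α i)) _ _)
    fun r s => comp_snd_mem_regularFunctions (entry_mem_repFunctions a r s))
    (inv_entry_mem_regularFunctions (n := fun i => Fin (α i)) _ _)) hF

end Action

section Moment

/-- Transport to the vertex `i` of an endomorphism at the vertex `j`, by zero if `j ≠ i`. -/
def atVertex (α : Q.I → ℕ) (i : Q.I) {j : Q.I} (M : Matrix (Fin (α j)) (Fin (α j)) K) :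
    Matrix (Fin (α i)) (Fin (α i)) K :=
  if h : j = i then M.submatrix (Fin.cast (congrArg α h).symm) (Fin.cast (congrArg α h).symm)
  else 0

theorem atVertex_self (i : Q.I) (M : Matrix (Fin (α i)) (Fin (α i)) K) : atVertex α i M = M :=
  dif_pos rfl

theorem atVertex_of_ne {i j : Q.I} (h : j ≠ i) (M : Matrix (Fin (α j)) (Fin (α j)) K) :
    atVertex α i M = 0 :=
  dif_neg h

theorem moment_eq_sum_atVertex (x : Q.Rep K α) (i : Q.I) :
    Q.moment K α x i = ∑ a, atVertex α i (j := Q.h a) (x (.inl a) * x (.inr a)) -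
      ∑ a, atVertex α i (j := Q.t a) (x (.inr a) * x (.inl a)) :=
  rfl

theorem atVertex_conj (g : ∀ i, GL (Fin (α i)) K) (i : Q.I) {j : Q.I}
    (M : Matrix (Fin (α j)) (Fin (α j)) K) :
    atVertex α i ((g j).val * M * (g j)⁻¹.val) = (g i).val * atVertex α i M * (g i)⁻¹.val := by
  rcases eq_or_ne j i with rfl | h
  · simp only [atVertex_self]
  · simp only [atVertex_of_ne h, Matrix.mul_zero, Matrix.zero_mul]

theorem moment_smul (g : ∀ i, GL (Fin (α i)) K) (x : Q.Rep K α) (i : Q.I) :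
    Q.moment K α (g • x) i = (g i).val * Q.moment K α x i * (g i)⁻¹.val := by
  have hconj {j k : Q.I} (M : Matrix (Fin (α j)) (Fin (α k)) K)
      (M' : Matrix (Fin (α k)) (Fin (α j)) K) :
      (g j).val * M * (g k)⁻¹.val * ((g k).val * M' * (g j)⁻¹.val) =
        (g j).val * (M * M') * (g j)⁻¹.val := by
    have := congrArg ((g j).val * M * · * M' * (g j)⁻¹.val) (Units.inv_mul (g k))
    simpa only [Matrix.mul_assoc, Matrix.one_mul] using this
  simp only [moment_eq_sum_atVertex, smul_apply, hconj, atVertex_conj, Matrix.mul_sub,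
    Matrix.sub_mul, Matrix.mul_sum, Matrix.sum_mul]

theorem smul_mem_momentFiber {l : Q.I → K} {x : Q.Rep K α} (hx : x ∈ Q.MomentFiber K l α)
    (g : ∀ i, GL (Fin (α i)) K) : g • x ∈ Q.MomentFiber K l α := fun i => by
  rw [moment_smul, hx i, Matrix.mul_smul, Matrix.mul_one, Matrix.smul_mul, Units.mul_inv]

theorem moment_apply_mem_repFunctions (i : Q.I) (r s : Fin (α i)) :
    (fun x => Q.moment K α x i r s) ∈ repFunctions Q K α := by
  have hat {j : Q.I} {M : Q.Rep K α → Matrix (Fin (α j)) (Fin (α j)) K}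
      (hM : ∀ r s, (fun x => M x r s) ∈ repFunctions Q K α) :
      (fun x => atVertex α i (M x) r s) ∈ repFunctions Q K α := by
    rcases eq_or_ne j i with rfl | h
    · simpa only [atVertex_self] using hM r s
    · simp only [atVertex_of_ne h]
      exact (repFunctions Q K α).zero_mem
  have h := (repFunctions Q K α).sub_mem
    (sum_mem fun (a : Q.A) (_ : a ∈ Finset.univ) => hat <|
      mul_apply_mem (entry_mem_repFunctions (.inl a)) (entry_mem_repFunctions (.inr a)))
    (sum_mem fun (a : Q.A) (_ : a ∈ Finset.univ) => hat <|
      mul_apply_mem (entry_mem_repFunctions (.inr a)) (entry_mem_repFunctions (.inl a)))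
  convert h using 1
  ext x
  simp [moment_eq_sum_atVertex, Matrix.sum_apply]

end Moment

section OrbitClosure

/-- The Zariski closure of the orbit of `x`. -/
def orbitClosure (x : Q.Rep K α) : Set (Q.Rep K α) :=
  {x₀ | ∀ F ∈ repFunctions Q K α, (∀ g : ∀ i, GL (Fin (α i)) K, F (g • x) = 0) → F x₀ = 0}

theorem apply_eq_of_mem_orbitClosure {x x₀ : Q.Rep K α} (h : x₀ ∈ orbitClosure x)
    {F : Q.Rep K α → K} (hF : F ∈ repFunctions Q K α) {c : K}
    (hc : ∀ g : ∀ i, GL (Fin (α i)) K, F (g • x) = c) : F x₀ = c :=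
  sub_eq_zero.mp <| h (F - algebraMap K _ c) (sub_mem hF (Subalgebra.algebraMap_mem _ c))
    fun g => sub_eq_zero.mpr (hc g)

theorem orbitClosure_subset_momentFiber {l : Q.I → K} {x : Q.Rep K α}
    (hx : x ∈ Q.MomentFiber K l α) : orbitClosure x ⊆ Q.MomentFiber K l α := fun x₀ h i => by
  ext r s
  exact apply_eq_of_mem_orbitClosure h (moment_apply_mem_repFunctions i r s) fun g =>
    congrFun₂ (smul_mem_momentFiber hx g i) r s

variable {N : ℕ} {e : ∀ i, Fin N → Matrix (Fin (α i)) (Fin (α i)) K} {x : Q.Rep K α}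

theorem degeneration_zero_mem_orbitClosure [Infinite K]
    (he : ∀ i, CompleteOrthogonalIdempotents (e i))
    (hx : ∀ a k j, k < j → e (Q.dh a) k * x a * e (Q.dt a) j = 0) :
    (fun a => degeneration (e (Q.dh a)) (e (Q.dt a)) (x a) 0) ∈ orbitClosure x := by
  intro F hF h
  let γ (t : K) : Q.Rep K α := fun a => degeneration (e (Q.dh a)) (e (Q.dt a)) (x a) t
  have hγ (t : Kˣ) : γ t = (fun i => oneParameterSubgroup (he i) t : ∀ i, GL (Fin (α i)) K) • x :=
    funext fun a => degeneration_eq_mul (he _) (he _) (hx a) t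
  have hFγ : F ∘ γ ∈ lineFunctions K := comp_mem_of_mem_repFunctions
    (fun a r s => degeneration_apply_mem_lineFunctions _ _ _ r s) hF
  exact eq_of_mem_lineFunctions hFγ fun t ht => (congrArg F (hγ (Units.mk0 t ht))).trans (h _)

end OrbitClosure

section CompositionSeries

variable {x : Q.Rep K α}

theorem simpleSubquot_of_covBy {V W : {U // Q.SubRep K α x U}} (h : V ⋖ W) :
    Q.SimpleSubquot K α x V W :=
  ⟨V.2, W.2, h.le, fun hVW => h.ne (Subtype.ext hVW), fun U hU hVU hUW =>
    (h.eq_or_eq (c := ⟨U, hU⟩) hVU hUW).imp (congrArg Subtype.val) (congrArg Subtype.val)⟩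

theorem exists_compositionSeries (x : Q.Rep K α) :
    ∃ (U : ℕ → ∀ i, Submodule K (Fin (α i) → K)) (N : ℕ), U 0 = ⊤ ∧ U N = ⊥ ∧ Antitone U ∧
      (∀ k, Q.SubRep K α x (U k)) ∧ ∀ k < N, Q.SimpleSubquot K α x (U (k + 1)) (U k) := by
  have hbot : Q.SubRep K α x ⊥ := fun a v hv => by
    rw [(Submodule.mem_bot K).mp hv, Matrix.mulVec_zero]
    exact Submodule.zero_mem _
  have htop : Q.SubRep K α x ⊤ := fun _ _ _ => Submodule.mem_top
  let S := {U // Q.SubRep K α x U}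
  have : Nonempty Sᵒᵈ := ⟨OrderDual.toDual ⟨⊥, hbot⟩⟩
  have : WellFoundedLT S := (Subtype.strictMono_coe _).wellFoundedLT
  have : WellFoundedGT (∀ i, Submodule K (Fin (α i) → K)) :=
    inferInstanceAs (WellFoundedLT (∀ i, (Submodule K (Fin (α i) → K))ᵒᵈ))
  have : WellFoundedGT S := (Subtype.strictMono_coe _).wellFoundedGT
  obtain ⟨b, hb0, N, hbN, hcov⟩ := exists_covBy_seq_of_wellFoundedLT_wellFoundedGT Sᵒᵈ
  let U : ℕ → S := fun k => OrderDual.ofDual (b (min k N))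
  have hUcov k (hk : k < N) : U (k + 1) ⋖ U k := by
    simpa only [U, min_eq_left hk.le, min_eq_left (Nat.succ_le_of_lt hk)] using
      (hcov k hk).ofDual
  refine ⟨fun k => (U k).1, N, top_le_iff.mp ?_, le_bot_iff.mp ?_, antitone_nat_of_succ_le ?_,
    fun k => (U k).2, fun k hk => simpleSubquot_of_covBy (hUcov k hk)⟩
  · have hle : b 0 ≤ OrderDual.toDual ⟨⊤, htop⟩ := hb0 fun _ => le_top
    simp only [U, Nat.zero_min]
    exact hle
  · have hle : OrderDual.toDual ⟨⊥, hbot⟩ ≤ b N := hbN fun _ => bot_le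
    simp only [U, min_self]
    exact hle
  · intro k
    rcases lt_or_ge k N with hk | hk
    · exact (hUcov k hk).le
    · simp only [U, min_eq_right hk, min_eq_right (Nat.le_succ_of_le hk), le_refl]

theorem exists_adapted_idempotents (x : Q.Rep K α) :
    ∃ (N : ℕ) (e : ∀ i, Fin N → Matrix (Fin (α i)) (Fin (α i)) K),
      (∀ i, CompleteOrthogonalIdempotents (e i)) ∧
      (∀ a k j, k < j → e (Q.dh a) k * x a * e (Q.dt a) j = 0) ∧
      ∀ k, ∃ U W, Q.SimpleSubquot K α x U W ∧
        ∀ i, e i k ≠ 0 → Module.finrank K (W i) ≠ Module.finrank K (U i) := by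
  obtain ⟨U, N, hU0, hUN, hU, hsub, hsimple⟩ := exists_compositionSeries x
  choose E hE using fun i => exists_isSplitting (U := fun k => U k i) (fun _ _ h => hU h i)
    (congrFun hU0 i) (congrFun hUN i)
  refine ⟨N, fun i k => LinearMap.toMatrixAlgEquiv' (E i k),
    fun i => (hE i).idempotents.map (LinearMap.toMatrixAlgEquiv' (R := K)).toRingHom,
    fun a k j hkj => ?_, fun k => ⟨_, _, hsimple k k.2, fun i hne hrank => hne ?_⟩⟩
  · change LinearMap.toMatrix' _ * x a * LinearMap.toMatrix' _ = 0
    apply Matrix.toLin'.injective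
    rw [Matrix.toLin'_mul, Matrix.toLin'_mul, Matrix.toLin'_toMatrix', Matrix.toLin'_toMatrix',
      map_zero]
    exact LinearMap.ext fun v => (hE _).apply_eq_zero k _ (hU (Nat.succ_le_of_lt hkj) _
      (hsub j a _ ((hE _).apply_mem j _)))
  · have hstep := Submodule.eq_of_le_of_finrank_eq (hU k.1.le_succ i) hrank.symm
    exact (congrArg _ ((hE i).eq_zero_of_eq hstep)).trans (map_zero _)

theorem exists_mem_orbitClosure_arrows_within_factors [Infinite K] (x : Q.Rep K α) :
    ∃ x₀ ∈ orbitClosure x, ∀ a, x₀ a ≠ 0 → ∃ U W, Q.SimpleSubquot K α x U W ∧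
      Module.finrank K (W (Q.dh a)) ≠ Module.finrank K (U (Q.dh a)) ∧
      Module.finrank K (W (Q.dt a)) ≠ Module.finrank K (U (Q.dt a)) := by
  obtain ⟨N, e, he, hx, hfactor⟩ := exists_adapted_idempotents x
  refine ⟨_, degeneration_zero_mem_orbitClosure he hx, fun a ha => ?_⟩
  rw [degeneration_zero (hx a)] at ha
  obtain ⟨k, -, hk⟩ := Finset.exists_ne_zero_of_sum_ne_zero ha
  obtain ⟨U, W, hUW, hrank⟩ := hfactor k
  refine ⟨U, W, hUW, hrank _ fun h => hk ?_, hrank _ fun h => hk ?_⟩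
  · rw [h, Matrix.zero_mul, Matrix.zero_mul]
  · rw [h, Matrix.mul_zero]

end CompositionSeries

section DirectSum

variable {β γ : Q.I → ℕ}

/-- The direct sum of two representations of `Q̄`. -/
def directSum (y : Q.Rep K β) (z : Q.Rep K γ) : Q.Rep K (β + γ) := fun a =>
  finBlockDiagonal (y a, z a)

theorem exists_directSum_eq {x : Q.Rep K (β + γ)}
    (hβγ : ∀ a, β (Q.dh a) ≠ 0 → γ (Q.dt a) ≠ 0 → x a = 0)
    (hγβ : ∀ a, γ (Q.dh a) ≠ 0 → β (Q.dt a) ≠ 0 → x a = 0) : ∃ y z, directSum y z = x := by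
  have h a : ∃ p, finBlockDiagonal p = x a := exists_finBlockDiagonal_eq
    (fun r s => congrFun₂ (hβγ a r.pos.ne' s.pos.ne') _ _)
    (fun r s => congrFun₂ (hγβ a r.pos.ne' s.pos.ne') _ _)
  choose p hp using h
  exact ⟨fun a => (p a).1, fun a => (p a).2, funext hp⟩

theorem atVertex_finBlockDiagonal (i : Q.I) {j : Q.I} (M : Matrix (Fin (β j)) (Fin (β j)) K)
    (N : Matrix (Fin (γ j)) (Fin (γ j)) K) :
    atVertex (β + γ) i (finBlockDiagonal (M, N)) =
      finBlockDiagonal (atVertex β i M, atVertex γ i N) := by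
  rcases eq_or_ne j i with rfl | h
  · simp only [atVertex_self]
  · rw [atVertex_of_ne h, atVertex_of_ne h, atVertex_of_ne h]
    exact (map_zero finBlockDiagonal).symm

theorem moment_directSum (y : Q.Rep K β) (z : Q.Rep K γ) (i : Q.I) :
    Q.moment K (β + γ) (directSum y z) i =
      finBlockDiagonal (Q.moment K β y i, Q.moment K γ z i) := by
  have hmul {j k : Q.I} (M : Matrix (Fin (β j)) (Fin (β k)) K)
      (M' : Matrix (Fin (β k)) (Fin (β j)) K) (N : Matrix (Fin (γ j)) (Fin (γ k)) K)
      (N' : Matrix (Fin (γ k)) (Fin (γ j)) K) :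
      atVertex (β + γ) i (finBlockDiagonal (M, N) * finBlockDiagonal (M', N')) =
        finBlockDiagonal (atVertex β i (M * M'), atVertex γ i (N * N')) := by
    rw [finBlockDiagonal_mul, atVertex_finBlockDiagonal]
  simp only [moment_eq_sum_atVertex]
  rw [← Prod.mk_sub_mk, prod_mk_sum, prod_mk_sum, map_sub, map_sum, map_sum]
  exact congrArg₂ _ (Finset.sum_congr rfl fun a _ => hmul _ _ _ _)
    (Finset.sum_congr rfl fun a _ => hmul _ _ _ _)

theorem directSum_mem_momentFiber_iff {l : Q.I → K} {y : Q.Rep K β} {z : Q.Rep K γ} :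
    directSum y z ∈ Q.MomentFiber K l (β + γ) ↔
      y ∈ Q.MomentFiber K l β ∧ z ∈ Q.MomentFiber K l γ := by
  have hscalar i : finBlockDiagonal (l i • ((1 : Matrix (Fin (β i)) (Fin (β i)) K),
      (1 : Matrix (Fin (γ i)) (Fin (γ i)) K))) = l i • 1 := by
    rw [map_smul, finBlockDiagonal_one]
  refine Iff.trans (forall_congr' fun i => ?_) forall_and
  rw [moment_directSum]
  exact (Eq.congr_right (hscalar i).symm).trans <|
    finBlockDiagonal_injective.eq_iff.trans Prod.ext_iff

theorem directSum_smul (g : ∀ i, GL (Fin (β i)) K) (g' : ∀ i, GL (Fin (γ i)) K)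
    (y : Q.Rep K β) (z : Q.Rep K γ) :
    directSum (g • y) (g' • z) =
      (fun i => glBlockDiagonal (g i) (g' i) : ∀ i, GL (Fin ((β + γ) i)) K) • directSum y z :=
  funext fun a => ((congrArg (· * finBlockDiagonal ((g (Q.dt a))⁻¹.val, (g' (Q.dt a))⁻¹.val))
    (finBlockDiagonal_mul _ _ _ _)).trans (finBlockDiagonal_mul _ _ _ _)).symm

end DirectSum

section FiberDirectSum

variable {β γ : Q.I → ℕ} {l : Q.I → K}

theorem fnRing_eq_map (V : Set (Q.Rep K β)) :
    Q.fnRing K β V = (repFunctions Q K β).map (precompAlgHom K Subtype.val) := by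
  rw [fnRing, repFunctions, ← AlgHom.range_comp, MvPolynomial.comp_aeval]
  rfl

theorem entry_mem_symFnRing {n : ℕ} {m : Fin n → ℕ} {d : Fin n → Q.I → ℕ} (p : SymIdx n m)
    (a : Q.DA) (r : Fin (d p.1 (Q.dh a))) (s : Fin (d p.1 (Q.dt a))) :
    (fun v : Q.SymFiber K n m d l => v.1 p a r s) ∈ Q.symFnRing K n m d l :=
  ⟨MvPolynomial.X ⟨p, a, r, s⟩, MvPolynomial.aeval_X _ _⟩

/-- Case analysis on the index of a factor of a product of two varieties, each taken once. -/
def symIdxCases {motive : SymIdx 2 (fun _ => 1) → Sort*} (h₀ : motive ⟨0, 0⟩)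
    (h₁ : motive ⟨1, 0⟩) : ∀ p, motive p
  | ⟨0, 0⟩ => h₀
  | ⟨1, 0⟩ => h₁

/-- The direct sum of representations as a map `μ_β⁻¹(λ) × μ_γ⁻¹(λ) → μ_{β+γ}⁻¹(λ)`. -/
def fiberDirectSum (v : Q.SymFiber K 2 (fun _ => 1) ![β, γ] l) : Q.MomentFiber K l (β + γ) :=
  ⟨directSum (β := β) (γ := γ) (v.1 ⟨0, 0⟩) (v.1 ⟨1, 0⟩),
    directSum_mem_momentFiber_iff.mpr ⟨v.2 ⟨0, 0⟩, v.2 ⟨1, 0⟩⟩⟩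

theorem exists_fiberDirectSum_eq {y : Q.Rep K β} {z : Q.Rep K γ}
    (h : directSum y z ∈ Q.MomentFiber K l (β + γ)) :
    ∃ v, fiberDirectSum v = ⟨directSum y z, h⟩ :=
  have hyz := directSum_mem_momentFiber_iff.mp h
  ⟨⟨symIdxCases y z, symIdxCases hyz.1 hyz.2⟩, rfl⟩

theorem symFnRing_eq_map :
    Q.symFnRing K 2 (fun _ => 1) ![β, γ] l =
      (repFunctions Q K (β + γ)).map (precompAlgHom K fun v => (fiberDirectSum v).1) := by
  apply le_antisymm
  · refine range_aeval_le ?_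
    rintro ⟨p, a, r, s⟩
    induction p using symIdxCases with
    | h₀ =>
      exact ⟨_, entry_mem_repFunctions a (Fin.castAdd _ r) (Fin.castAdd _ s),
        funext fun v => finBlockDiagonal_castAdd_castAdd _ r s⟩
    | h₁ =>
      exact ⟨_, entry_mem_repFunctions a (Fin.natAdd _ r) (Fin.natAdd _ s),
        funext fun v => finBlockDiagonal_natAdd_natAdd _ r s⟩
  · rintro _ ⟨F, hF, rfl⟩
    refine comp_mem_of_mem_repFunctions (fun a r s => ?_) hF
    exact finBlockDiagonal_apply_mem (T := Subalgebra.toSubmodule (Q.symFnRing K _ _ _ l))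
      (entry_mem_symFnRing (d := ![β, γ]) ⟨0, 0⟩ a)
      (entry_mem_symFnRing (d := ![β, γ]) ⟨1, 0⟩ a) r s

theorem fiberDirectSum_symGlAct {v w : Q.SymFiber K 2 (fun _ => 1) ![β, γ] l}
    {g : ∀ p : SymIdx 2 (fun _ => 1), Q.Gl K (![β, γ] p.1)}
    (h : w.1 = Q.symGlAct K 2 (fun _ => 1) ![β, γ] g v.1) :
    (fiberDirectSum w).1 = (fun i => glBlockDiagonal (g ⟨0, 0⟩ i) (g ⟨1, 0⟩ i) :
      ∀ i, GL (Fin ((β + γ) i)) K) • (fiberDirectSum v).1 :=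
  (congrArg₂ directSum (congrFun h ⟨0, 0⟩) (congrFun h ⟨1, 0⟩)).trans (directSum_smul _ _ _ _)

theorem comp_fiberDirectSum_mem_symInvRing {f : Q.MomentFiber K l (β + γ) → K}
    (hf : f ∈ Q.InvRing K l (β + γ)) :
    f ∘ fiberDirectSum ∈ Q.SymInvRing K 2 (fun _ => 1) ![β, γ] l := by
  obtain ⟨hpoly, hinv⟩ := hf
  refine ⟨⟨?_, fun v w ⟨g, hg⟩ => hinv _ _ ⟨_, fiberDirectSum_symGlAct hg⟩⟩,
    fun v w ⟨π, hπ⟩ => congrArg (f ∘ fiberDirectSum) (Subtype.ext ?_)⟩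
  · obtain ⟨F, hF, rfl⟩ := (fnRing_eq_map _).le hpoly
    exact symFnRing_eq_map.ge ⟨F, hF, rfl⟩
  · rw [hπ]
    exact funext fun p => by rw [symPermAct, Subsingleton.elim (π p.1 p.2) p.2]

/-- Restriction of invariants of `μ_{β+γ}⁻¹(λ)` to the direct sums. -/
def restrictToDirectSums (β γ : Q.I → ℕ) (l : Q.I → K) :
    Q.InvRing K l (β + γ) →ₐ[K] Q.SymInvRing K 2 (fun _ => 1) ![β, γ] l :=
  ((precompAlgHom K fiberDirectSum).comp (Q.InvRing K l (β + γ)).val).codRestrict _ fun f =>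
    comp_fiberDirectSum_mem_symInvRing f.2

theorem restrictToDirectSums_injective
    (h : ∀ x ∈ Q.MomentFiber K l (β + γ), ∃ y z, directSum y z ∈ orbitClosure x) :
    Function.Injective (restrictToDirectSums β γ l) := by
  rw [injective_iff_map_eq_zero]
  rintro ⟨f, hpoly, hinv⟩ hf
  obtain ⟨F, hF, rfl⟩ := (fnRing_eq_map _).le hpoly
  refine Subtype.ext (funext fun x => ?_)
  obtain ⟨y, z, hyz⟩ := h x x.2
  obtain ⟨v, hv⟩ := exists_fiberDirectSum_eq (orbitClosure_subset_momentFiber x.2 hyz)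
  calc F x.1 = F (directSum y z) := (apply_eq_of_mem_orbitClosure hyz hF fun g =>
        (hinv x ⟨g • x.1, smul_mem_momentFiber x.2 g⟩ ⟨g, rfl⟩).symm).symm
    _ = F (fiberDirectSum v).1 := by rw [hv]
    _ = 0 := congrFun (congrArg Subtype.val hf) v

theorem restrictToDirectSums_surjective [CharZero K] (h : ∀ i, β i = 0 ∨ γ i = 0) :
    Function.Surjective (restrictToDirectSums β γ l) := by
  rintro ⟨f, ⟨hpoly, hinv⟩, _⟩
  obtain ⟨F, hF, rfl⟩ := symFnRing_eq_map.le hpoly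
  have hY : ∀ y ∈ Set.range fun v : Q.SymFiber K 2 (fun _ => 1) ![β, γ] l => (fiberDirectSum v).1,
      ∀ g : ∀ i, GL (Fin ((β + γ) i)) K, F (g • y) = F y := by
    rintro _ ⟨v, rfl⟩ g
    choose g₁ g₂ hg using fun i => exists_glBlockDiagonal_eq (h i) (g i)
    let g' : ∀ p : SymIdx 2 (fun _ => 1), Q.Gl K (![β, γ] p.1) := symIdxCases g₁ g₂
    let w : Q.SymFiber K 2 (fun _ => 1) ![β, γ] l :=
      ⟨Q.symGlAct K _ _ _ g' v.1, fun p => smul_mem_momentFiber (v.2 p) (g' p)⟩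
    have hw : (fiberDirectSum w).1 = g • (fiberDirectSum v).1 :=
      (fiberDirectSum_symGlAct rfl).trans (congrArg (· • _) (funext hg))
    exact (congrArg F hw).symm.trans (hinv v w ⟨g', rfl⟩).symm
  obtain ⟨H, hH, hHinv, hHF⟩ := exists_invariant_eqOn (n := fun i => Fin ((β + γ) i))
    (fun F hF => comp_smul_mem_regularFunctions hF) hF hY
  refine ⟨⟨H ∘ Subtype.val, (fnRing_eq_map _).ge ⟨H, hH, rfl⟩, fun x y ⟨g, hg⟩ => ?_⟩,
    Subtype.ext (funext fun v => hHF ⟨v, rfl⟩)⟩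
  exact (hHinv g x).symm.trans (congrArg H hg.symm)

end FiberDirectSum

theorem exists_directSum_mem_orbitClosure [Infinite K] {β γ : Q.I → ℕ} {J L : Set Q.I}
    (hJL : Disjoint J L) (hβ : ∀ i, β i ≠ 0 → i ∈ J) (hγ : ∀ i, γ i ≠ 0 → i ∈ L)
    {x : Q.Rep K (β + γ)}
    (hfactors : ∀ U W, Q.SimpleSubquot K (β + γ) x U W →
      (∀ i, Module.finrank K (W i) ≠ Module.finrank K (U i) → i ∈ J) ∨
      (∀ i, Module.finrank K (W i) ≠ Module.finrank K (U i) → i ∈ L)) :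
    ∃ y z, directSum y z ∈ orbitClosure x := by
  obtain ⟨x₀, hx₀, harrows⟩ := exists_mem_orbitClosure_arrows_within_factors x
  have hends a (ha : x₀ a ≠ 0) : (Q.dh a ∈ J ∧ Q.dt a ∈ J) ∨ (Q.dh a ∈ L ∧ Q.dt a ∈ L) := by
    obtain ⟨U, W, hUW, hh, ht⟩ := harrows a ha
    exact (hfactors U W hUW).imp (fun h => ⟨h _ hh, h _ ht⟩) fun h => ⟨h _ hh, h _ ht⟩
  have hnot {i} (hi : i ∈ J) : i ∉ L := Set.disjoint_left.mp hJL hi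
  obtain ⟨y, z, rfl⟩ : ∃ y z, directSum y z = x₀ := exists_directSum_eq
    (fun a hh ht => of_not_not fun ha => (hends a ha).elim
      (fun h => hnot h.2 (hγ _ ht)) fun h => hnot (hβ _ hh) h.1)
    (fun a hh ht => of_not_not fun ha => (hends a ha).elim
      (fun h => hnot h.1 (hγ _ hh)) fun h => hnot (hβ _ ht) h.2)
  exact ⟨y, z, hx₀⟩

end FinQuiver

theorem stmt18_general (Q : FinQuiver) (K : Type) [Field K] [CharZero K]
    (l : Q.I → K) (J Kv : Set Q.I)
    (hdisj : ∀ i, ¬ (i ∈ J ∧ i ∈ Kv))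
    (α αJ αK : Q.I → ℕ)
    (hsum : α = αJ + αK)
    (hsJ : ∀ i, αJ i ≠ 0 → i ∈ J) (hsK : ∀ i, αK i ≠ 0 → i ∈ Kv)
    (hcf : ∀ x ∈ Q.MomentFiber K l α,
      ∀ U W : ∀ i : Q.I, Submodule K (Fin (α i) → K),
        Q.SimpleSubquot K α x U W →
        (∀ i, Module.finrank K ↥(W i) ≠ Module.finrank K ↥(U i) → i ∈ J) ∨
        (∀ i, Module.finrank K ↥(W i) ≠ Module.finrank K ↥(U i) → i ∈ Kv)) :
    Nonempty (Q.InvRing K l α ≃ₐ[K]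
      Q.SymInvRing K 2 (fun _ => 1) ![αJ, αK] l) := by
  subst hsum
  have hJKv : Disjoint J Kv := Set.disjoint_left.mpr fun i hJ hK => hdisj i ⟨hJ, hK⟩
  have hzero i : αJ i = 0 ∨ αK i = 0 :=
    or_iff_not_and_not.mpr fun h => hdisj i ⟨hsJ i h.1, hsK i h.2⟩
  exact ⟨AlgEquiv.ofBijective (FinQuiver.restrictToDirectSums αJ αK l)
    ⟨FinQuiver.restrictToDirectSums_injective fun x hx =>
      FinQuiver.exists_directSum_mem_orbitClosure hJKv hsJ hsK (hcf x hx),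
    FinQuiver.restrictToDirectSums_surjective hzero⟩⟩

/-- if the vertex set of `Q` is a disjoint union `𝒥 ∪ 𝒦`,
`α = α_𝒥 + α_𝒦` with supports in `𝒥`, `𝒦`, and the dimension vector of every
composition factor (simple subquotient) of every `Π^λ`-module of dimension `α`
has support in `𝒥` or in `𝒦`, then `N(λ,α) ≅ N(λ,α_𝒥) × N(λ,α_𝒦)` as varieties. -/
theorem stmt18 (Q : FinQuiver) (K : Type) [Field K] [CharZero K] [IsAlgClosed K]
    (l : Q.I → K) (J Kv : Set Q.I)
    (hdisj : ∀ i, ¬ (i ∈ J ∧ i ∈ Kv)) (hcover : ∀ i, i ∈ J ∨ i ∈ Kv)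
    (α αJ αK : Q.I → ℕ)
    (hsum : α = αJ + αK)
    (hsJ : ∀ i, αJ i ≠ 0 → i ∈ J) (hsK : ∀ i, αK i ≠ 0 → i ∈ Kv)
    (hcf : ∀ x ∈ Q.MomentFiber K l α,
      ∀ U W : ∀ i : Q.I, Submodule K (Fin (α i) → K),
        Q.SimpleSubquot K α x U W →
        (∀ i, Module.finrank K ↥(W i) ≠ Module.finrank K ↥(U i) → i ∈ J) ∨
        (∀ i, Module.finrank K ↥(W i) ≠ Module.finrank K ↥(U i) → i ∈ Kv)) :
    Nonempty (Q.InvRing K l α ≃ₐ[K]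
      Q.SymInvRing K 2 (fun _ => 1) ![αJ, αK] l) :=
  stmt18_general Q K l J Kv hdisj α αJ αK hsum hsJ hsK hcf

end
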